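/- The largest eigenvalue of the common lines operator C is λ_max = 1/2, its eigenspace is 3-dimensional, and every other eigenvalue λ of C satisfies λ ≤ 1/12; in particular there is a spectral gap of 1/2 − 1/12 = 5/12 separating the maximal eigenvalue from the rest of the spectrum. -/

import Mathlib

noncomputable section

open MeasureTheory Submodule
open scoped RealInnerProductSpace

abbrev V : Type := EuclideanSpace ℝ (Fin 3)

abbrev S2 : Type := Metric.sphere (0 : V) 1

/-- The plane `x^⊥` orthogonal to a point `x` of the unit sphere. -/
def plane (x : S2) : Submodule ℝ V := (ℝ ∙ (x : V))ᗮ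

/-- The common line `x^⊥ ∩ y^⊥`. -/
def cline (x y : S2) : Submodule ℝ V := plane x ⊓ plane y

/-- The common-lines kernel `C(x,y) : V → V`: orthogonal projection onto the
line `x^⊥ ∩ y^⊥`.  Its restriction to `y^⊥` is the kernel of the paper: it sends
`v ∈ y^⊥` to the orthogonal projection of `v` onto `x^⊥ ∩ y^⊥`, viewed inside `x^⊥`
(projecting the ambient `V` first onto `y^⊥` does not change the result). -/
def Cker (x y : S2) : V →ₗ[ℝ] V :=
  (cline x y).subtype ∘ₗ (orthogonalProjection (cline x y)).toLinearMap

/-- The map on the sphere induced by a linear isometry of `V`. -/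
def sphereMap (g : V ≃ₗᵢ[ℝ] V) (x : S2) : S2 :=
  ⟨g x, by
    have := mem_sphere_zero_iff_norm.mp x.2
    simp [mem_sphere_zero_iff_norm, this]⟩

/-- The Hilbert space `H` of square integrable sections of the bundle of planes, realized as
the subspace of `L²` maps `s : S² → V` with `s x ∈ x^⊥` almost everywhere; it carries the
inner product `(s₁, s₂) = ∫ ⟪s₁ x, s₂ x⟫ dx` inherited from `L²`. -/
def Hsub (μ : Measure S2) : Submodule ℝ (Lp V 2 μ) where
  carrier := {f | ∀ᵐ x ∂μ, f x ∈ plane x}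
  add_mem' := by
    intro f g hf hg
    filter_upwards [hf, hg, Lp.coeFn_add f g] with x h1 h2 h3
    simp only [Pi.add_apply] at h3
    rw [h3]; exact add_mem h1 h2
  zero_mem' := by
    filter_upwards [Lp.coeFn_zero V 2 μ] with x h
    simp only [Pi.zero_apply] at h
    rw [h]; exact zero_mem _
  smul_mem' := by
    intro c f hf
    filter_upwards [hf, Lp.coeFn_smul c f] with x h1 h2
    simp only [Pi.smul_apply] at h2
    rw [h2]; exact smul_mem _ _ h1



lemma CL_continuous_sphereMap (g : V ≃ₗᵢ[ℝ] V) : Continuous (sphereMap g) := by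
  unfold sphereMap
  exact Continuous.subtype_mk (by fun_prop) _

lemma CL_inv (μ : Measure S2)
    (hμ : ∀ g : V ≃ₗᵢ[ℝ] V, MeasurePreserving (sphereMap g) μ μ) (g : V ≃ₗᵢ[ℝ] V) (F : S2 → ℝ) :
    ∫ y, F (sphereMap g y) ∂μ = ∫ y, F y ∂μ := by
  refine (hμ g).integral_comp ?_ F
  apply (CL_continuous_sphereMap g).measurableEmbedding
  intro x y h
  have := congrArg (Subtype.val) h
  exact Subtype.ext (g.injective this)

def cc (i : Fin 3) (y : S2) : ℝ := (y : V) i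

/-- frame transfer -/
lemma CL_frame (μ : Measure S2)
    (hμ : ∀ g : V ≃ₗᵢ[ℝ] V, MeasurePreserving (sphereMap g) μ μ)
    (B : OrthonormalBasis (Fin 3) ℝ V) (F : ℝ → ℝ → ℝ → ℝ) :
    ∫ y : S2, F (inner ℝ (B 0) (y : V)) (inner ℝ (B 1) (y : V)) (inner ℝ (B 2) (y : V)) ∂μ
      = ∫ y : S2, F (cc 0 y) (cc 1 y) (cc 2 y) ∂μ := by
  rw [← CL_inv μ hμ B.repr (fun y : S2 => F (cc 0 y) (cc 1 y) (cc 2 y))]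
  simp [cc, sphereMap, OrthonormalBasis.repr_apply_apply]

def CL_rotL (s : ℝ) : V →ₗᵢ[ℝ] V where
  toFun y := !₂[y 0, Real.cos s * y 1 - Real.sin s * y 2, Real.sin s * y 1 + Real.cos s * y 2]
  map_add' x y := by ext i; fin_cases i <;> simp <;> ring
  map_smul' c y := by ext i; fin_cases i <;> simp <;> ring
  norm_map' y := by
    simp only [LinearMap.coe_mk, AddHom.coe_mk, EuclideanSpace.norm_eq, Fin.sum_univ_three]
    congr 1
    simp
    linear_combination (y 1 ^ 2 + y 2 ^ 2) * Real.sin_sq_add_cos_sq s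

def CL_rot (s : ℝ) : V ≃ₗᵢ[ℝ] V := (CL_rotL s).toLinearIsometryEquiv rfl

lemma CL_rot_apply (s : ℝ) (y : V) : CL_rot s y =
   !₂[y 0, Real.cos s * y 1 - Real.sin s * y 2, Real.sin s * y 1 + Real.cos s * y 2] := rfl

lemma CL_sq (y : S2) : cc 0 y ^ 2 + cc 1 y ^ 2 + cc 2 y ^ 2 = 1 := by
  have := mem_sphere_zero_iff_norm.mp y.2
  have h2 : ‖(y : V)‖ ^ 2 = 1 := by rw [this]; norm_num
  rw [EuclideanSpace.norm_sq_eq] at h2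
  simpa [cc, Fin.sum_univ_three] using h2

/-- derivative along rotation has zero mean -/
lemma CL_rot_mean (μ : Measure S2) [IsProbabilityMeasure μ]
    (hμ : ∀ g : V ≃ₗᵢ[ℝ] V, MeasurePreserving (sphereMap g) μ μ)
    (G D : S2 → ℝ) (K : ℝ) (hG : Measurable G) (hD : Measurable D)
    (hGb : ∀ y, |G y| ≤ K) (hDb : ∀ y, |D y| ≤ K)
    (h : ∀ y s, HasDerivAt (fun s => G (sphereMap (CL_rot s) y)) (D (sphereMap (CL_rot s) y)) s) :
    ∫ y, D y ∂μ = 0 := by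
  have hm : ∀ s, Measurable (sphereMap (CL_rot s)) :=
    fun s => (CL_continuous_sphereMap _).measurable
  have key := hasDerivAt_integral_of_dominated_loc_of_deriv_le (μ := μ)
    (F := fun s y => G (sphereMap (CL_rot s) y)) (F' := fun s y => D (sphereMap (CL_rot s) y))
    (x₀ := (0:ℝ)) (s := Set.univ) (bound := fun _ => K) Filter.univ_mem
    (Filter.Eventually.of_forall fun s => (hG.comp (hm s)).aestronglyMeasurable)
    (Integrable.of_bound (hG.comp (hm 0)).aestronglyMeasurable K
      (Filter.Eventually.of_forall fun y => hGb _))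
    ((hD.comp (hm 0)).aestronglyMeasurable)
    (Filter.Eventually.of_forall fun y s _ => hDb _)
    (integrable_const _)
    (Filter.Eventually.of_forall fun y s _ => h y s)
  have h2 := key.2
  simp only [CL_inv μ hμ] at h2
  exact h2.unique (hasDerivAt_const _ _) 

lemma CL_rot0 (s : ℝ) (y : S2) : cc 0 (sphereMap (CL_rot s) y) = cc 0 y := rfl
lemma CL_rot1 (s : ℝ) (y : S2) : cc 1 (sphereMap (CL_rot s) y) =
  Real.cos s * cc 1 y - Real.sin s * cc 2 y := rfl
lemma CL_rot2 (s : ℝ) (y : S2) : cc 2 (sphereMap (CL_rot s) y) =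
  Real.sin s * cc 1 y + Real.cos s * cc 2 y := rfl

lemma CL_coord_le (y : S2) (i : Fin 3) : |cc i y| ≤ 1 := by
  have h := CL_sq y
  rw [← sq_le_one_iff_abs_le_one]
  fin_cases i <;> simp only [Fin.zero_eta, Fin.mk_one, Fin.reduceFinMk] <;> nlinarith [sq_nonneg (cc 0 y), sq_nonneg (cc 1 y), sq_nonneg (cc 2 y)]

lemma CL_frac_le (a b : ℝ) : |a * b / (a ^ 2 + b ^ 2)| ≤ 1 := by
  rw [abs_div, abs_of_nonneg (by positivity : 0 ≤ a ^ 2 + b ^ 2)]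
  apply div_le_one_of_le₀ _ (by positivity)
  rw [abs_le]; constructor <;> nlinarith [sq_nonneg (a + b), sq_nonneg (a - b), sq_nonneg a, sq_nonneg b]

lemma CL_frac_le2 (a b : ℝ) : |b ^ 2 / (a ^ 2 + b ^ 2)| ≤ 1 := by
  rw [abs_div, abs_of_nonneg (by positivity : 0 ≤ a ^ 2 + b ^ 2)]
  apply div_le_one_of_le₀ _ (by positivity)
  rw [abs_of_nonneg (by positivity)]; nlinarith [sq_nonneg a]

lemma CL_frac_le1 (a b : ℝ) : |a ^ 2 / (a ^ 2 + b ^ 2)| ≤ 1 := by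
  rw [add_comm]; exact CL_frac_le2 b a

lemma CL_pow_le {a : ℝ} (h : |a| ≤ 1) (n : ℕ) : |a ^ n| ≤ 1 := by
  rw [abs_pow]; exact pow_le_one₀ (abs_nonneg _) h

lemma CL_mul_le {a b : ℝ} (h : |a| ≤ 1) (h' : |b| ≤ 1) : |a * b| ≤ 1 := by
  rw [abs_mul]; exact mul_le_one₀ h (abs_nonneg _) h'

lemma CL_coord_meas (i : Fin 3) : Measurable (fun y : S2 => cc i y) := by
  have : Continuous (fun y : S2 => cc i y) := by unfold cc; fun_prop
  exact this.measurable

lemma CL_mom_frac0 (μ : Measure S2) [IsProbabilityMeasure μ]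
    (hμ : ∀ g : V ≃ₗᵢ[ℝ] V, MeasurePreserving (sphereMap g) μ μ) (p q : ℕ) :
    ∫ y : S2, cc 0 y ^ p * cc 1 y ^ q * (cc 1 y ^ 2 / (cc 1 y ^ 2 + cc 2 y ^ 2)
      - (q + 1) * (cc 2 y ^ 2 / (cc 1 y ^ 2 + cc 2 y ^ 2))) ∂μ = 0 := by
  have m0 := CL_coord_meas 0
  have m1 := CL_coord_meas 1
  have m2 := CL_coord_meas 2
  refine CL_rot_mean μ hμ (fun y => cc 0 y ^ p * cc 1 y ^ q *
    (cc 1 y * cc 2 y / (cc 1 y ^ 2 + cc 2 y ^ 2))) _ (1 + (q + 1)) (by fun_prop)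
    (by fun_prop) ?_ ?_ ?_
  · intro y
    have := CL_mul_le (CL_mul_le (CL_pow_le (CL_coord_le y 0) p) (CL_pow_le (CL_coord_le y 1) q))
      (CL_frac_le (cc 1 y) (cc 2 y))
    have hq : (0:ℝ) ≤ q := by positivity
    linarith
  · intro y
    rw [abs_mul]
    have h1 := CL_mul_le (CL_pow_le (CL_coord_le y 0) p) (CL_pow_le (CL_coord_le y 1) q)
    have hq : (0:ℝ) ≤ q := by positivity
    have h2 : |cc 1 y ^ 2 / (cc 1 y ^ 2 + cc 2 y ^ 2)
      - (q + 1) * (cc 2 y ^ 2 / (cc 1 y ^ 2 + cc 2 y ^ 2))| ≤ 1 + ((q:ℝ) + 1) := by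
      refine (abs_sub _ _).trans ?_
      rw [abs_mul, abs_of_nonneg (by positivity : (0:ℝ) ≤ q + 1)]
      have := CL_frac_le1 (cc 1 y) (cc 2 y)
      have := CL_frac_le2 (cc 1 y) (cc 2 y)
      nlinarith
    calc _ ≤ 1 * (1 + ((q:ℝ) + 1)) := mul_le_mul h1 h2 (abs_nonneg _) (by norm_num)
      _ = _ := by ring
  · intro y s
    simp only [CL_rot0, CL_rot1, CL_rot2]
    set A := cc 1 y
    set B := cc 2 y
    have hr : ∀ s : ℝ, (Real.cos s * A - Real.sin s * B) ^ 2 + (Real.sin s * A + Real.cos s * B) ^ 2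
      = A ^ 2 + B ^ 2 := fun s => by
        linear_combination (A ^ 2 + B ^ 2) * Real.sin_sq_add_cos_sq s
    simp only [hr]
    have d1 : HasDerivAt (fun s => Real.cos s * A - Real.sin s * B)
      (-(Real.sin s * A + Real.cos s * B)) s := by
      refine (((Real.hasDerivAt_cos s).mul_const A).sub
        ((Real.hasDerivAt_sin s).mul_const B)).congr_deriv ?_
      ring
    have d2 : HasDerivAt (fun s => Real.sin s * A + Real.cos s * B)
      (Real.cos s * A - Real.sin s * B) s := by
      refine (((Real.hasDerivAt_sin s).mul_const A).add
        ((Real.hasDerivAt_cos s).mul_const B)).congr_deriv ?_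
      ring
    have d3 := ((d1.pow q).const_mul (cc 0 y ^ p)).mul ((d1.mul d2).div_const (A ^ 2 + B ^ 2))
    refine d3.congr_deriv ?_
    simp only [Pi.mul_apply, Pi.pow_apply]
    rcases q with _ | q
    · simp only [Nat.cast_zero, zero_mul, pow_zero]; ring
    · simp only [Nat.add_sub_cancel]; push_cast; ring

lemma CL_mom0 (μ : Measure S2) [IsProbabilityMeasure μ]
    (hμ : ∀ g : V ≃ₗᵢ[ℝ] V, MeasurePreserving (sphereMap g) μ μ) (q : ℕ) :
    ∫ y : S2, cc 1 y ^ q * (cc 1 y ^ 2 - (q + 1) * cc 2 y ^ 2) ∂μ = 0 := by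
  have m0 := CL_coord_meas 0
  have m1 := CL_coord_meas 1
  have m2 := CL_coord_meas 2
  refine CL_rot_mean μ hμ (fun y => cc 1 y ^ q * (cc 1 y * cc 2 y)) _ (1 + (q + 1))
    (by fun_prop) (by fun_prop) ?_ ?_ ?_
  · intro y
    have := CL_mul_le (CL_pow_le (CL_coord_le y 1) q)
      (CL_mul_le (CL_coord_le y 1) (CL_coord_le y 2))
    have hq : (0:ℝ) ≤ q := by positivity
    linarith
  · intro y
    rw [abs_mul]
    have h1 := (CL_pow_le (CL_coord_le y 1) q)
    have hq : (0:ℝ) ≤ q := by positivity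
    have h2 : |cc 1 y ^ 2 - (q + 1) * cc 2 y ^ 2| ≤ 1 + ((q:ℝ) + 1) := by
      refine (abs_sub _ _).trans ?_
      rw [abs_mul, abs_of_nonneg (by positivity : (0:ℝ) ≤ q + 1)]
      have := CL_pow_le (CL_coord_le y 1) 2
      have := CL_pow_le (CL_coord_le y 2) 2
      nlinarith
    calc _ ≤ 1 * (1 + ((q:ℝ) + 1)) := mul_le_mul h1 h2 (abs_nonneg _) (by norm_num)
      _ = _ := by ring
  · intro y s
    simp only [CL_rot1, CL_rot2]
    set A := cc 1 y
    set B := cc 2 y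
    have d1 : HasDerivAt (fun s => Real.cos s * A - Real.sin s * B)
      (-(Real.sin s * A + Real.cos s * B)) s := by
      refine (((Real.hasDerivAt_cos s).mul_const A).sub
        ((Real.hasDerivAt_sin s).mul_const B)).congr_deriv ?_
      ring
    have d2 : HasDerivAt (fun s => Real.sin s * A + Real.cos s * B)
      (Real.cos s * A - Real.sin s * B) s := by
      refine (((Real.hasDerivAt_sin s).mul_const A).add
        ((Real.hasDerivAt_cos s).mul_const B)).congr_deriv ?_
      ring
    have d3 := (d1.pow q).mul (d1.mul d2)
    refine d3.congr_deriv ?_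
    simp only [Pi.mul_apply, Pi.pow_apply]
    rcases q with _ | q
    · simp only [Nat.cast_zero, zero_mul, pow_zero]; ring
    · simp only [Nat.add_sub_cancel]; push_cast; ring

lemma CL_perm (μ : Measure S2)
    (hμ : ∀ g : V ≃ₗᵢ[ℝ] V, MeasurePreserving (sphereMap g) μ μ)
    (e : Equiv.Perm (Fin 3)) (F : ℝ → ℝ → ℝ → ℝ) :
    ∫ y : S2, F (cc (e 0) y) (cc (e 1) y) (cc (e 2) y) ∂μ
      = ∫ y : S2, F (cc 0 y) (cc 1 y) (cc 2 y) ∂μ := by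
  rw [← CL_frame μ hμ ((EuclideanSpace.basisFun (Fin 3) ℝ).reindex e.symm) F]
  simp [cc, EuclideanSpace.inner_single_left]

def CL_refL : V →ₗᵢ[ℝ] V where
  toFun y := !₂[y 0, y 1, - y 2]
  map_add' x y := by ext i; fin_cases i <;> simp ; ring
  map_smul' c y := by ext i; fin_cases i <;> simp
  norm_map' y := by
    simp [EuclideanSpace.norm_eq, Fin.sum_univ_three]

lemma CL_ref (μ : Measure S2)
    (hμ : ∀ g : V ≃ₗᵢ[ℝ] V, MeasurePreserving (sphereMap g) μ μ) (F : ℝ → ℝ → ℝ → ℝ) :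
    ∫ y : S2, F (cc 0 y) (cc 1 y) (- cc 2 y) ∂μ
      = ∫ y : S2, F (cc 0 y) (cc 1 y) (cc 2 y) ∂μ :=
  CL_inv μ hμ (CL_refL.toLinearIsometryEquiv rfl) (fun y => F (cc 0 y) (cc 1 y) (cc 2 y))

lemma CL_int_bd (μ : Measure S2) [IsProbabilityMeasure μ] {F : S2 → ℝ} (hF : Measurable F) (K : ℝ)
    (h : ∀ y, |F y| ≤ K) : Integrable F μ :=
  Integrable.of_bound hF.aestronglyMeasurable K (Filter.Eventually.of_forall h)

lemma CL_int_poly (μ : Measure S2) [IsProbabilityMeasure μ] (i j : Fin 3) (p q : ℕ) :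
    Integrable (fun y => cc i y ^ p * cc j y ^ q) μ := by
  have m0 := CL_coord_meas i
  have m1 := CL_coord_meas j
  exact CL_int_bd μ (by fun_prop) 1 fun y =>
    CL_mul_le (CL_pow_le (CL_coord_le y _) _) (CL_pow_le (CL_coord_le y _) _)

lemma CL_int_pow (μ : Measure S2) [IsProbabilityMeasure μ] (i : Fin 3) (p : ℕ) :
    Integrable (fun y => cc i y ^ p) μ := by
  simpa using CL_int_poly μ i i p 0

lemma CL_mom_rec (μ : Measure S2) [IsProbabilityMeasure μ]
    (hμ : ∀ g : V ≃ₗᵢ[ℝ] V, MeasurePreserving (sphereMap g) μ μ) (q : ℕ) :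
    (q + 3) * ∫ y : S2, cc 1 y ^ (q + 2) ∂μ = (q + 1) * ∫ y : S2, cc 1 y ^ q ∂μ := by
  have h := CL_mom0 μ hμ q
  have h1 : ∫ y : S2, cc 1 y ^ q * (cc 1 y ^ 2 - (q + 1) * cc 2 y ^ 2) ∂μ
    = ∫ y : S2, cc 1 y ^ (q + 2) ∂μ - (q + 1) * ∫ y : S2, cc 1 y ^ q * cc 2 y ^ 2 ∂μ := by
    rw [← integral_const_mul, ← integral_sub (CL_int_pow μ _ _) ((CL_int_poly μ _ _ _ _).const_mul _)]
    congr 1; ext y; ring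
  have h2 : ∫ y : S2, cc 1 y ^ q ∂μ = ∫ y : S2, cc 1 y ^ (q + 2) ∂μ
      + (∫ y : S2, cc 1 y ^ q * cc 2 y ^ 2 ∂μ + ∫ y : S2, cc 1 y ^ q * cc 0 y ^ 2 ∂μ) := by
    rw [← integral_add (CL_int_poly μ _ _ _ _) (CL_int_poly μ _ _ _ _),
      ← integral_add (CL_int_pow μ 1 (q + 2))
        (by exact (CL_int_poly μ _ _ _ _).add (CL_int_poly μ _ _ _ _))]
    congr 1; ext y
    have := CL_sq y
    linear_combination - cc 1 y ^ q * this
  have h3 : ∫ y : S2, cc 1 y ^ q * cc 0 y ^ 2 ∂μ = ∫ y : S2, cc 1 y ^ q * cc 2 y ^ 2 ∂μ := by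
    have := CL_perm μ hμ (Equiv.swap 0 2) (fun _ b c => b ^ q * c ^ 2)
    simpa [Equiv.swap_apply_of_ne_of_ne] using this
  rw [h1] at h
  rw [h3] at h2
  linear_combination 2 * h - (q + 1) * h2

lemma CL_mom (μ : Measure S2) [IsProbabilityMeasure μ]
    (hμ : ∀ g : V ≃ₗᵢ[ℝ] V, MeasurePreserving (sphereMap g) μ μ) (m : ℕ) :
    ∫ y : S2, cc 1 y ^ (2 * m) ∂μ = 1 / (2 * m + 1) := by
  induction m with
  | zero => simp
  | succ m ih =>
    have := CL_mom_rec μ hμ (2 * m)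
    rw [ih] at this
    have e : 2 * (m + 1) = 2 * m + 2 := by ring
    rw [e]
    push_cast at this ⊢
    field_simp at this ⊢
    linear_combination this

lemma CL_mom_unit (μ : Measure S2) [IsProbabilityMeasure μ]
    (hμ : ∀ g : V ≃ₗᵢ[ℝ] V, MeasurePreserving (sphereMap g) μ μ) (m : ℕ) (a : V) (ha : ‖a‖ = 1) :
    ∫ y : S2, inner ℝ a (y : V) ^ (2 * m) ∂μ = 1 / (2 * m + 1) := by
  obtain ⟨B, hB⟩ := Orthonormal.exists_orthonormalBasis_extension_of_card_eq (𝕜 := ℝ) (E := V)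
    (ι := Fin 3) (by simp) (v := fun _ => a) (s := {1}) (by
      constructor
      · intro i; simpa using ha
      · intro i j hij; exact absurd (Subsingleton.elim i j) hij)
  have := CL_frame μ hμ B (fun _ b _ => b ^ (2 * m))
  rw [hB 1 rfl, CL_mom μ hμ] at this
  exact this

lemma CL_mom_vec (μ : Measure S2) [IsProbabilityMeasure μ]
    (hμ : ∀ g : V ≃ₗᵢ[ℝ] V, MeasurePreserving (sphereMap g) μ μ) (m : ℕ) (a : V) :
    ∫ y : S2, inner ℝ a (y : V) ^ (2 * m) ∂μ = ‖a‖ ^ (2 * m) / (2 * m + 1) := by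
  by_cases ha : a = 0
  · subst ha
    rcases m with _ | m
    · simp
    · simp
  · have hn : ‖a‖ ≠ 0 := norm_ne_zero_iff.mpr ha
    have := CL_mom_unit μ hμ m (‖a‖⁻¹ • a) (by rw [norm_smul, norm_inv, norm_norm, inv_mul_cancel₀ hn])
    simp only [real_inner_smul_left, mul_pow, integral_const_mul] at this
    rw [inv_pow] at this
    have h3 : ‖a‖ ^ (2 * m) ≠ 0 := pow_ne_zero _ hn
    rw [inv_mul_eq_iff_eq_mul₀ h3] at this
    rw [this]; ring

lemma CL_ae_ne (μ : Measure S2) [IsProbabilityMeasure μ]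
    (hμ : ∀ g : V ≃ₗᵢ[ℝ] V, MeasurePreserving (sphereMap g) μ μ) (a : V) (ha : ‖a‖ = 1) :
    ∀ᵐ y : S2 ∂μ, inner ℝ a (y : V) ^ 2 ≠ 1 := by
  set A : Set S2 := {y | inner ℝ a (y : V) ^ 2 = 1} with hA
  have hAm : MeasurableSet A := by
    apply IsClosed.measurableSet
    exact isClosed_eq (by fun_prop) (by fun_prop)
  have hb : ∀ m : ℕ, μ.real A ≤ 1 / (2 * m + 1) := by
    intro m
    rw [← CL_mom_unit μ hμ m a ha, ← integral_indicator_one hAm]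
    apply integral_mono
    · exact (integrable_const (1:ℝ)).indicator hAm
    · refine CL_int_bd μ ?_ 1 ?_
      · have : Continuous (fun y : S2 => inner ℝ a (y : V) ^ (2 * m)) := by fun_prop
        exact this.measurable
      · intro y
        apply CL_pow_le
        refine (abs_real_inner_le_norm _ _).trans ?_
        rw [ha, mem_sphere_zero_iff_norm.mp y.2]; norm_num
    · intro y
      by_cases hy : y ∈ A
      · rw [Set.indicator_of_mem hy]
        have : inner ℝ a (y : V) ^ 2 = 1 := hy
        simp only [pow_mul, this]; simp
      · rw [Set.indicator_of_notMem hy]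
        simp only [pow_mul]; positivity
  have h0 : μ.real A = 0 := by
    apply le_antisymm _ measureReal_nonneg
    apply ge_of_tendsto' (f := fun m : ℕ => (1:ℝ) / (2 * m + 1)) (x := Filter.atTop) _ hb
    have h1 : Filter.Tendsto (fun m : ℕ => (2 * (m:ℝ) + 1)) Filter.atTop Filter.atTop := by
      apply Filter.tendsto_atTop_add_const_right
      exact Filter.Tendsto.const_mul_atTop (by norm_num) tendsto_natCast_atTop_atTop
    simp only [one_div]
    exact h1.inv_tendsto_atTop
  have : μ A = 0 := by simpa [measureReal_def, ENNReal.toReal_eq_zero_iff] using h0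
  rw [ae_iff]; simpa only [ne_eq, not_not] using this

lemma CL_ae_rho (μ : Measure S2) [IsProbabilityMeasure μ]
    (hμ : ∀ g : V ≃ₗᵢ[ℝ] V, MeasurePreserving (sphereMap g) μ μ) :
    ∀ᵐ y : S2 ∂μ, cc 1 y ^ 2 + cc 2 y ^ 2 ≠ 0 := by
  filter_upwards [CL_ae_ne μ hμ (EuclideanSpace.single 0 1) (by simp)] with y hy h
  apply hy
  have := CL_sq y
  simp only [EuclideanSpace.inner_single_left, map_one, one_mul]
  change cc 0 y ^ 2 = 1
  linarith

lemma CL_int_frac (μ : Measure S2) [IsProbabilityMeasure μ] (p q : ℕ) :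
    Integrable (fun y => cc 0 y ^ p * cc 1 y ^ q * (cc 2 y ^ 2 / (cc 1 y ^ 2 + cc 2 y ^ 2))) μ := by
  have m0 := CL_coord_meas 0
  have m1 := CL_coord_meas 1
  have m2 := CL_coord_meas 2
  exact CL_int_bd μ (by fun_prop) 1 fun y =>
    CL_mul_le (CL_mul_le (CL_pow_le (CL_coord_le y _) _) (CL_pow_le (CL_coord_le y _) _))
      (CL_frac_le2 _ _)

lemma CL_mom_frac (μ : Measure S2) [IsProbabilityMeasure μ]
    (hμ : ∀ g : V ≃ₗᵢ[ℝ] V, MeasurePreserving (sphereMap g) μ μ) (p q : ℕ) :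
    ∫ y : S2, cc 0 y ^ p * cc 1 y ^ q * (cc 2 y ^ 2 / (cc 1 y ^ 2 + cc 2 y ^ 2)) ∂μ
    = (∫ y : S2, cc 0 y ^ p * cc 1 y ^ q ∂μ) / (q + 2) := by
  have h := CL_mom_frac0 μ hμ p q
  have h1 : ∫ y : S2, cc 0 y ^ p * cc 1 y ^ q * (cc 1 y ^ 2 / (cc 1 y ^ 2 + cc 2 y ^ 2)
      - (q + 1) * (cc 2 y ^ 2 / (cc 1 y ^ 2 + cc 2 y ^ 2))) ∂μ
      = ∫ y : S2, cc 0 y ^ p * cc 1 y ^ q ∂μ - (q + 2) *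
        ∫ y : S2, cc 0 y ^ p * cc 1 y ^ q * (cc 2 y ^ 2 / (cc 1 y ^ 2 + cc 2 y ^ 2)) ∂μ := by
    rw [← integral_const_mul, ← integral_sub (CL_int_poly μ _ _ _ _) ((CL_int_frac μ _ _).const_mul _)]
    apply integral_congr_ae
    filter_upwards [CL_ae_rho μ hμ] with y hy
    field_simp
    ring
  rw [h1] at h
  rw [eq_div_iff (by positivity)]
  linear_combination -h

lemma CL_key (μ : Measure S2) [IsProbabilityMeasure μ]
    (hμ : ∀ g : V ≃ₗᵢ[ℝ] V, MeasurePreserving (sphereMap g) μ μ) (m : ℕ) (α r : ℝ) :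
    r ^ 2 * ∫ y : S2, (α * cc 0 y + r * cc 1 y) ^ (2 * m) *
        (cc 2 y ^ 2 / (cc 1 y ^ 2 + cc 2 y ^ 2)) ∂μ
    = ((α ^ 2 + r ^ 2) ^ (m + 1) - α ^ (2 * m + 2)) / ((2 * m + 1) * (2 * m + 2)) := by
  set κ : ℕ → ℝ := fun p => α ^ (2 * m - p) * ((2 * m).choose p) *
    ∫ y : S2, cc 0 y ^ (2 * m - p) * cc 1 y ^ p ∂μ with hκ
  have hA : ∀ r : ℝ, ∑ p ∈ Finset.range (2 * m + 1), κ p * r ^ p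
      = (α ^ 2 + r ^ 2) ^ m / (2 * m + 1) := by
    intro r
    have h := CL_mom_vec μ hμ m (!₂[α, r, 0] : V)
    have e1 : ∀ y : S2, inner ℝ (!₂[α, r, 0] : V) (y : V) = r * cc 1 y + α * cc 0 y := by
      intro y; simp [cc, PiLp.inner_apply, Fin.sum_univ_three]; ring
    have e2 : ‖(!₂[α, r, 0] : V)‖ ^ (2 * m) = (α ^ 2 + r ^ 2) ^ m := by
      rw [pow_mul, EuclideanSpace.norm_sq_eq]; simp [Fin.sum_univ_three]
    rw [e2] at h
    rw [← h]
    simp only [e1, add_pow]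
    rw [integral_finsetSum]
    · apply Finset.sum_congr rfl
      intro p _
      rw [hκ]
      simp only
      rw [← integral_const_mul, ← integral_mul_const]
      congr 1; ext y; ring
    · intro p _
      refine ((CL_int_poly μ 0 1 (2 * m - p) p).const_mul
        (r ^ p * α ^ (2 * m - p) * ((2 * m).choose p))).congr ?_
      filter_upwards with y
      ring
  have hQ : ∀ r : ℝ, r ^ 2 * ∫ y : S2, (α * cc 0 y + r * cc 1 y) ^ (2 * m) *
        (cc 2 y ^ 2 / (cc 1 y ^ 2 + cc 2 y ^ 2)) ∂μ
        = ∑ p ∈ Finset.range (2 * m + 1), κ p / (p + 2) * r ^ (p + 2) := by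
    intro r
    simp only [add_comm (α * _) (r * _), add_pow, Finset.sum_mul]
    rw [integral_finsetSum, Finset.mul_sum]
    · apply Finset.sum_congr rfl
      intro p _
      rw [hκ]
      simp only
      have := CL_mom_frac μ hμ (2 * m - p) p
      rw [mul_div_assoc, ← this, ← integral_const_mul, ← integral_const_mul, ← integral_mul_const]
      congr 1; ext y; ring
    · intro p _
      refine ((CL_int_frac μ (2 * m - p) p).const_mul
        (r ^ p * α ^ (2 * m - p) * ((2 * m).choose p))).congr ?_
      filter_upwards with y
      ring
  rw [hQ r]
  have hd : ∀ r : ℝ, HasDerivAt (fun r => ∑ p ∈ Finset.range (2 * m + 1), κ p / (p + 2) * r ^ (p + 2)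
      - ((α ^ 2 + r ^ 2) ^ (m + 1) - α ^ (2 * m + 2)) / ((2 * m + 1) * (2 * m + 2))) 0 r := by
    intro r
    have d1 : HasDerivAt (fun r => ∑ p ∈ Finset.range (2 * m + 1), κ p / (p + 2) * r ^ (p + 2))
        (∑ p ∈ Finset.range (2 * m + 1), κ p / (p + 2) * (((p + 2 : ℕ) : ℝ) * r ^ (p + 1))) r :=
      HasDerivAt.fun_sum fun p _ => (hasDerivAt_pow (p + 2) r).const_mul _
    have d2 : HasDerivAt (fun r : ℝ => α ^ 2 + r ^ 2) (2 * r) r := by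
      simpa using (hasDerivAt_pow 2 r).const_add (α ^ 2)
    have d3 := ((d2.pow (m + 1)).sub_const (α ^ (2 * m + 2))).div_const
      (((2 * m + 1) * (2 * m + 2) : ℝ))
    refine (d1.sub d3).congr_deriv ?_
    have e : ∑ p ∈ Finset.range (2 * m + 1), κ p / (p + 2) * (((p + 2 : ℕ) : ℝ) * r ^ (p + 1))
       = r * ∑ p ∈ Finset.range (2 * m + 1), κ p * r ^ p := by
      rw [Finset.mul_sum]
      apply Finset.sum_congr rfl
      intro p _
      push_cast
      field_simp
      ring
    rw [e, hA]
    simp only [Nat.add_sub_cancel]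
    push_cast
    field_simp
    ring
  have hc := is_const_of_deriv_eq_zero (fun r => (hd r).differentiableAt) (fun r => (hd r).deriv) r 0
  have h0 : ∑ p ∈ Finset.range (2 * m + 1), κ p / (p + 2) * (0:ℝ) ^ (p + 2)
      - ((α ^ 2 + (0:ℝ) ^ 2) ^ (m + 1) - α ^ (2 * m + 2)) / ((2 * m + 1) * (2 * m + 2)) = 0 := by
    have : (α ^ 2 + (0:ℝ) ^ 2) ^ (m + 1) = α ^ (2 * m + 2) := by
      rw [show 2 * m + 2 = 2 * (m + 1) by ring, pow_mul]; simp
    rw [this]; simp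
  have hc' := hc.trans h0
  linarith

def CL_kv (x y : S2) (v : V) : V :=
  v - inner ℝ (x : V) v • (x : V)
    - (inner ℝ ((y : V) - inner ℝ (x : V) (y : V) • (x : V)) v / (1 - inner ℝ (x : V) (y : V) ^ 2)) •
      ((y : V) - inner ℝ (x : V) (y : V) • (x : V))

lemma CL_nrm (x : S2) : ‖(x : V)‖ = 1 := mem_sphere_zero_iff_norm.mp x.2

lemma CL_self (x : S2) : inner ℝ (x : V) (x : V) = 1 := by
  rw [real_inner_self_eq_norm_sq, CL_nrm]; norm_num

lemma CL_mem_plane (x : S2) (v : V) : v ∈ plane x ↔ inner ℝ (x : V) v = 0 := by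
  unfold plane; rw [Submodule.mem_orthogonal_singleton_iff_inner_right]

lemma CL_Cker_eq (x y : S2) (h : inner ℝ (x : V) (y : V) ^ 2 ≠ 1) (v : V) :
    Cker x y v = CL_kv x y v := by
  change (cline x y).starProjection v = _
  have h' : 1 - inner ℝ (x : V) (y : V) ^ 2 ≠ 0 := fun h0 => h (by linarith)
  apply Submodule.eq_starProjection_of_mem_of_inner_eq_zero
  · refine Submodule.mem_inf.mpr ⟨?_, ?_⟩
    · rw [CL_mem_plane]
      simp only [CL_kv, inner_sub_right, inner_smul_right, CL_self]
      ring
    · rw [CL_mem_plane]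
      simp only [CL_kv, inner_sub_right, inner_sub_left, real_inner_smul_left, inner_smul_right, CL_self,
        real_inner_comm (x : V) (y : V)]
      field_simp
      ring
  · intro w hw
    obtain ⟨h1, h2⟩ := Submodule.mem_inf.mp hw
    rw [CL_mem_plane] at h1 h2
    simp only [CL_kv, inner_sub_left, real_inner_smul_left, h1, h2]
    ring

lemma CL_kv_symm (x y : S2) (u v : V) : inner ℝ u (CL_kv x y v) = inner ℝ v (CL_kv x y u) := by
  simp only [CL_kv, inner_sub_right, inner_sub_left, real_inner_smul_left, inner_smul_right]
  rw [real_inner_comm u v, real_inner_comm u (x : V), real_inner_comm v (x : V),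
    real_inner_comm u (y : V), real_inner_comm v (y : V)]
  ring

lemma CL_Cker_comm (x y : S2) (v : V) : Cker x y v = Cker y x v := by
  have : cline x y = cline y x := inf_comm _ _
  change (cline x y).starProjection v = (cline y x).starProjection v
  simp only [this]

lemma CL_kv_comm (x y : S2) (h : inner ℝ (x : V) (y : V) ^ 2 ≠ 1) (v : V) :
    CL_kv x y v = CL_kv y x v := by
  rw [← CL_Cker_eq x y h, CL_Cker_comm, CL_Cker_eq]
  rwa [real_inner_comm]

lemma CL_kv_norm (x y : S2) (v : V) : ‖CL_kv x y v‖ ≤ 3 * ‖v‖ := by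
  unfold CL_kv
  set z := (y : V) - inner ℝ (x : V) (y : V) • (x : V) with hz
  have hzn : ‖z‖ ^ 2 = 1 - inner ℝ (x : V) (y : V) ^ 2 := by
    rw [← real_inner_self_eq_norm_sq, hz]
    simp only [inner_sub_right, inner_sub_left, real_inner_smul_left, inner_smul_right, CL_self,
        real_inner_comm (x : V) (y : V)]
    ring
  rw [← hzn]
  have h1 : ‖inner ℝ (x : V) v • (x : V)‖ ≤ ‖v‖ := by
    rw [norm_smul, CL_nrm, mul_one]
    refine (norm_inner_le_norm _ _).trans ?_
    rw [CL_nrm, one_mul]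
  have h2 : ‖(inner ℝ z v / ‖z‖ ^ 2) • z‖ ≤ ‖v‖ := by
    by_cases h0 : z = 0
    · rw [h0]; simp
    · have hn : 0 < ‖z‖ := norm_pos_iff.mpr h0
      rw [norm_smul, norm_div, Real.norm_of_nonneg (sq_nonneg ‖z‖), div_mul_eq_mul_div,
        div_le_iff₀ (by positivity)]
      have := norm_inner_le_norm (𝕜 := ℝ) z v
      nlinarith
  have h3 := norm_sub_le (v - inner ℝ (x : V) v • (x : V)) ((inner ℝ z v / ‖z‖ ^ 2) • z)
  have h4 := norm_sub_le v (inner ℝ (x : V) v • (x : V))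
  linarith

def CL_S (m : ℕ) (α : ℝ) : ℝ := ∑ i ∈ Finset.range (m + 1), α ^ (2 * i)
def CL_R (m : ℕ) (α : ℝ) : ℝ := ∑ j ∈ Finset.range m, ((m : ℝ) - j) * α ^ (2 * j)

lemma CL_S_eq (m : ℕ) (α : ℝ) : (1 - α ^ 2) * CL_S m α = 1 - α ^ (2 * m + 2) := by
  induction m with
  | zero => simp [CL_S]
  | succ m ih =>
    have : CL_S (m + 1) α = CL_S m α + α ^ (2 * (m + 1)) := by
      unfold CL_S; rw [Finset.sum_range_succ]
    rw [this, mul_add, ih]; ring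

lemma CL_R_eq (m : ℕ) (α : ℝ) : (1 - α ^ 2) * CL_R m α = m + 1 - CL_S m α := by
  induction m with
  | zero => simp [CL_S, CL_R]
  | succ m ih =>
    have h1 : CL_S (m + 1) α = CL_S m α + α ^ (2 * (m + 1)) := by
      unfold CL_S; rw [Finset.sum_range_succ]
    have h2 : CL_R (m + 1) α = CL_R m α + CL_S m α := by
      unfold CL_R CL_S
      rw [Finset.sum_range_succ, Finset.sum_range_succ _ m, ← add_assoc, ← Finset.sum_add_distrib]
      congr 1
      · apply Finset.sum_congr rfl; intro j _; push_cast; ring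
      · push_cast; ring
    rw [h1, h2, mul_add, ih, CL_S_eq]; push_cast; ring

lemma CL_main (μ : Measure S2) [IsProbabilityMeasure μ]
    (hμ : ∀ g : V ≃ₗᵢ[ℝ] V, MeasurePreserving (sphereMap g) μ μ) (m : ℕ) (a b u : V) (x : S2)
    (ha : ‖a‖ = 1) (hx : inner ℝ a (x : V) ^ 2 ≠ 1) (hu : inner ℝ (x : V) u = 0) :
    ((2 * m + 1) * (2 * m + 2)) * ∫ y : S2, inner ℝ a (y : V) ^ (2 * m) * inner ℝ u (CL_kv x y b) ∂μ
    = (2 * m + 2 - CL_S m (inner ℝ a (x : V))) * inner ℝ b u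
      - 2 * CL_R m (inner ℝ a (x : V)) * (inner ℝ a b - inner ℝ a (x : V) * inner ℝ b (x : V))
        * inner ℝ a u := by
  set α := inner ℝ a (x : V) with hα
  have hα1 : α ^ 2 < 1 := by
    apply lt_of_le_of_ne _ hx
    rw [sq_le_one_iff_abs_le_one]
    refine (abs_real_inner_le_norm _ _).trans ?_
    rw [ha, CL_nrm]; norm_num
  set r := Real.sqrt (1 - α ^ 2) with hr
  have hr2 : r ^ 2 = 1 - α ^ 2 := Real.sq_sqrt (by linarith)
  have hr0 : r ≠ 0 := by
    intro h; rw [h] at hr2; linarith [hr2]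
  set e : V := r⁻¹ • (a - α • (x : V)) with he
  have haa : inner ℝ a a = 1 := by rw [real_inner_self_eq_norm_sq, ha]; norm_num
  have hxe : inner ℝ (x : V) e = 0 := by
    rw [he, inner_smul_right, inner_sub_right, inner_smul_right, CL_self, real_inner_comm]
    simp [hα]
  have hee : inner ℝ e e = 1 := by
    have hh : inner ℝ (a - α • (x : V)) (a - α • (x : V)) = r ^ 2 := by
      simp only [inner_sub_right, inner_sub_left, real_inner_smul_left, inner_smul_right, CL_self,
        haa]
      have hxa : inner ℝ (x : V) a = α := real_inner_comm _ _
      rw [hxa, ← hα, hr2]; ring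
    rw [he, real_inner_smul_left, inner_smul_right, hh]
    field_simp
  have hane : a = α • (x : V) + r • e := by
    rw [he, smul_inv_smul₀ hr0]; abel
  obtain ⟨B, hB⟩ := Orthonormal.exists_orthonormalBasis_extension_of_card_eq (𝕜 := ℝ) (E := V)
    (ι := Fin 3) (by simp) (v := ![(x : V), e, 0]) (s := {0, 1}) (by
      rw [orthonormal_iff_ite]
      rintro ⟨i, hi⟩ ⟨j, hj⟩
      have hex : inner ℝ e (x : V) = 0 := by rw [real_inner_comm]; exact hxe
      rcases hi with rfl | rfl <;> rcases hj with rfl | rfl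
      · rw [if_pos rfl]; exact CL_self x
      · rw [if_neg (fun h => by simpa using congrArg Subtype.val h)]; exact hxe
      · rw [if_neg (fun h => by simpa using congrArg Subtype.val h)]; exact hex
      · rw [if_pos rfl]; exact hee)
  have hB0 : B 0 = x := hB 0 (by simp)
  have hB1 : B 1 = e := hB 1 (by simp)
  set u1 := inner ℝ e u with hu1
  set u2 := inner ℝ (B 2) u with hu2
  set b1 := inner ℝ e b with hb1
  set b2 := inner ℝ (B 2) b with hb2
  have expand : ∀ p q : V, inner ℝ p q = inner ℝ (x : V) p * inner ℝ (x : V) q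
      + inner ℝ e p * inner ℝ e q + inner ℝ (B 2) p * inner ℝ (B 2) q := by
    intro p q
    rw [← B.sum_inner_mul_inner p q, Fin.sum_univ_three, hB0, hB1]
    rw [real_inner_comm p, real_inner_comm p e, real_inner_comm p (B 2)]
  have step1 : ∫ y : S2, inner ℝ a (y : V) ^ (2 * m) * inner ℝ u (CL_kv x y b) ∂μ
     = ∫ y : S2, (fun t z1 z2 : ℝ => (α * t + r * z1) ^ (2 * m) * (u1 * b1 + u2 * b2
        - (z1 * u1 + z2 * u2) * (z1 * b1 + z2 * b2) / (z1 ^ 2 + z2 ^ 2)))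
        (inner ℝ (B 0) (y : V)) (inner ℝ (B 1) (y : V)) (inner ℝ (B 2) (y : V)) ∂μ := by
    congr 1; ext y
    simp only [hB0, hB1]
    have h1 : inner ℝ a (y : V) = α * inner ℝ (x : V) (y : V) + r * inner ℝ e (y : V) := by
      conv_lhs => rw [hane]
      rw [inner_add_left, real_inner_smul_left, real_inner_smul_left]
    have h2 := expand y y
    rw [CL_self] at h2
    have h3 := expand y u
    have h4 := expand y b
    have h5 := expand u b
    have h6 : inner ℝ u (y : V) = inner ℝ (y : V) u := real_inner_comm _ _
    have h7 : inner ℝ u (x : V) = 0 := by rw [real_inner_comm]; exact hu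
    rw [hu] at h3 h5
    rw [h1]
    congr 1
    simp only [CL_kv, inner_sub_right, inner_sub_left, real_inner_smul_left, inner_smul_right, h7, h6]
    have h8 : 1 - inner ℝ (x : V) (y : V) ^ 2 = inner ℝ e (y : V) ^ 2 + inner ℝ (B 2) (y : V) ^ 2 := by
      linear_combination h2
    rw [h8, h3, h4, h5]
    ring
  have fr := CL_frame μ hμ B (fun t z1 z2 : ℝ => (α * t + r * z1) ^ (2 * m) * (u1 * b1 + u2 * b2
        - (z1 * u1 + z2 * u2) * (z1 * b1 + z2 * b2) / (z1 ^ 2 + z2 ^ 2)))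
  rw [step1.trans fr]
  have m0 := CL_coord_meas 0
  have m1 := CL_coord_meas 1
  have m2 := CL_coord_meas 2
  set f : S2 → ℝ := fun y => (α * cc 0 y + r * cc 1 y) ^ (2 * m) with hf
  have fm : Measurable f := by fun_prop
  have fb : ∀ y, |f y| ≤ (|α| + |r|) ^ (2 * m) := by
    intro y
    rw [hf]
    simp only
    rw [abs_pow]
    apply pow_le_pow_left₀ (abs_nonneg _)
    refine (abs_add_le _ _).trans ?_
    rw [abs_mul, abs_mul]
    have := mul_le_mul_of_nonneg_left (CL_coord_le y 0) (abs_nonneg α)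
    have := mul_le_mul_of_nonneg_left (CL_coord_le y 1) (abs_nonneg r)
    linarith
  have fbm : ∀ (y : S2) (c : ℝ), |c| ≤ 1 → |f y * c| ≤ (|α| + |r|) ^ (2 * m) := by
    intro y c hc
    rw [abs_mul]
    have := fb y
    have := abs_nonneg (f y)
    nlinarith [abs_nonneg c]
  have I1 : Integrable f μ := CL_int_bd μ fm _ fb
  have I2 : Integrable (fun y => f y * (cc 2 y ^ 2 / (cc 1 y ^ 2 + cc 2 y ^ 2))) μ :=
    CL_int_bd μ (by fun_prop) _ fun y => fbm y _ (CL_frac_le2 _ _)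
  have I3 : Integrable (fun y => f y * (cc 1 y * cc 2 y / (cc 1 y ^ 2 + cc 2 y ^ 2))) μ :=
    CL_int_bd μ (by fun_prop) _ fun y => fbm y _ (CL_frac_le _ _)
  have v1 : ∫ y, f y ∂μ = 1 / (2 * m + 1) := by
    rw [← CL_mom_unit μ hμ m a ha]
    have := CL_frame μ hμ B (fun t z1 _ => (α * t + r * z1) ^ (2 * m))
    rw [hf, ← this]
    congr 1; ext y
    have h1 : inner ℝ a (y : V) = α * inner ℝ (x : V) (y : V) + r * inner ℝ e (y : V) := by
      conv_lhs => rw [hane]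
      rw [inner_add_left, real_inner_smul_left, real_inner_smul_left]
    rw [hB0, hB1, h1]
  have v2 := CL_key μ hμ m α r
  have v3 : ∫ y, f y * (cc 1 y * cc 2 y / (cc 1 y ^ 2 + cc 2 y ^ 2)) ∂μ = 0 := by
    have := CL_ref μ hμ (fun t z1 z2 => (α * t + r * z1) ^ (2 * m) * (z1 * z2 / (z1 ^ 2 + z2 ^ 2)))
    have h2 : ∀ y, (α * cc 0 y + r * cc 1 y) ^ (2 * m) *
        (cc 1 y * -cc 2 y / (cc 1 y ^ 2 + (-cc 2 y) ^ 2)) =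
        - (f y * (cc 1 y * cc 2 y / (cc 1 y ^ 2 + cc 2 y ^ 2))) := by
      intro y; rw [hf]; ring
    simp only [h2, integral_neg] at this
    have h3 : - ∫ y, f y * (cc 1 y * cc 2 y / (cc 1 y ^ 2 + cc 2 y ^ 2)) ∂μ =
      ∫ y, f y * (cc 1 y * cc 2 y / (cc 1 y ^ 2 + cc 2 y ^ 2)) ∂μ := this
    linarith
  have step2 : ∫ y : S2, (α * cc 0 y + r * cc 1 y) ^ (2 * m) * (u1 * b1 + u2 * b2
        - (cc 1 y * u1 + cc 2 y * u2) * (cc 1 y * b1 + cc 2 y * b2) / (cc 1 y ^ 2 + cc 2 y ^ 2)) ∂μ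
      = (u1 * b1 - u2 * b2) * ∫ y, f y * (cc 2 y ^ 2 / (cc 1 y ^ 2 + cc 2 y ^ 2)) ∂μ
        + u2 * b2 * (1 / (2 * m + 1)) := by
    have : ∫ y : S2, ((u1 * b1 - u2 * b2) * (f y * (cc 2 y ^ 2 / (cc 1 y ^ 2 + cc 2 y ^ 2)))
        + u2 * b2 * f y) - (u1 * b2 + u2 * b1) *
          (f y * (cc 1 y * cc 2 y / (cc 1 y ^ 2 + cc 2 y ^ 2))) ∂μ
      = (u1 * b1 - u2 * b2) * ∫ y, f y * (cc 2 y ^ 2 / (cc 1 y ^ 2 + cc 2 y ^ 2)) ∂μ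
        + u2 * b2 * (1 / (2 * m + 1)) := by
      rw [integral_sub (by exact (I2.const_mul _).add (I1.const_mul _)) (I3.const_mul _),
        integral_add (I2.const_mul _) (I1.const_mul _), integral_const_mul, integral_const_mul,
        integral_const_mul, v3, v1]
      ring
    rw [← this]
    apply integral_congr_ae
    filter_upwards [CL_ae_rho μ hμ] with y hy
    rw [hf]
    field_simp
    ring
  rw [step2]
  set g := ∫ y, f y * (cc 2 y ^ 2 / (cc 1 y ^ 2 + cc 2 y ^ 2)) ∂μ with hg
  have v2' : r ^ 2 * g = ((α ^ 2 + r ^ 2) ^ (m + 1) - α ^ (2 * m + 2)) / ((2 * m + 1) * (2 * m + 2)) := v2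
  have hgS : ((2 * m + 1) * (2 * m + 2)) * g = CL_S m α := by
    have h1 := CL_S_eq m α
    rw [← hr2] at h1
    have h2 : α ^ 2 + r ^ 2 = 1 := by rw [hr2]; ring
    rw [h2, one_pow, eq_div_iff (by positivity)] at v2'
    have : r ^ 2 * (((2 * m + 1) * (2 * m + 2)) * g) = r ^ 2 * CL_S m α := by
      rw [h1]; linear_combination v2'
    exact mul_left_cancel₀ (pow_ne_zero 2 hr0) this
  have hRS := CL_R_eq m α
  rw [← hr2] at hRS
  have hbu : inner ℝ b u = u1 * b1 + u2 * b2 := by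
    rw [expand b u, hu]; ring
  have hau : inner ℝ a u = r * u1 := by
    conv_lhs => rw [hane]
    rw [inner_add_left, real_inner_smul_left, real_inner_smul_left, hu]; ring
  have hab : inner ℝ a b - α * inner ℝ b (x : V) = r * b1 := by
    conv_lhs => rw [hane]
    rw [inner_add_left, real_inner_smul_left, real_inner_smul_left, real_inner_comm b]; ring
  rw [hbu, hau, hab]
  have hz : ((2 * m + 1) * (2 * m + 2)) * ((u1 * b1 - u2 * b2) * g + u2 * b2 * (1 / (2 * m + 1)))
    = (u1 * b1 - u2 * b2) * (((2 * m + 1) * (2 * m + 2)) * g) + u2 * b2 * (2 * m + 2) := by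
    have : (2 * (m:ℝ) + 1) ≠ 0 := by positivity
    field_simp
  rw [hz, hgS]
  linear_combination (2 * u1 * b1) * hRS

lemma CL_neg_inv (μ : Measure S2)
    (hμ : ∀ g : V ≃ₗᵢ[ℝ] V, MeasurePreserving (sphereMap g) μ μ) (F : S2 → ℝ)
    (h : ∀ y, F (sphereMap (LinearIsometryEquiv.neg ℝ) y) = - F y) : ∫ y, F y ∂μ = 0 := by
  have := CL_inv μ hμ (LinearIsometryEquiv.neg ℝ) F
  simp only [h, integral_neg] at this
  linarith

lemma CL_main_odd (μ : Measure S2)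
    (hμ : ∀ g : V ≃ₗᵢ[ℝ] V, MeasurePreserving (sphereMap g) μ μ) (m : ℕ) (a b u : V) (x : S2) :
    ∫ y : S2, inner ℝ a (y : V) ^ (2 * m + 1) * inner ℝ u (CL_kv x y b) ∂μ = 0 := by
  apply CL_neg_inv μ hμ
  intro y
  have e : ((sphereMap (LinearIsometryEquiv.neg ℝ) y : S2) : V) = - (y : V) := rfl
  simp only [CL_kv, e, inner_neg_right, inner_sub_right, inner_sub_left, inner_neg_left,
    real_inner_smul_left, inner_smul_right]
  rw [neg_pow]
  have : (-1 : ℝ) ^ (2 * m + 1) = -1 := Odd.neg_one_pow ⟨m, rfl⟩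
  rw [this]
  ring

lemma CL_kv_meas {X : Type*} [MeasurableSpace X] {f g : X → S2} {h : X → V}
    (hf : Measurable f) (hg : Measurable g) (hh : Measurable h) :
    Measurable fun z => CL_kv (f z) (g z) (h z) := by
  unfold CL_kv
  have h1 : Measurable fun z => (f z : V) := measurable_subtype_coe.comp hf
  have h2 : Measurable fun z => (g z : V) := measurable_subtype_coe.comp hg
  have h3 : Measurable fun z => inner ℝ (f z : V) (g z : V) := h1.inner h2
  have h4 : Measurable fun z => inner ℝ (f z : V) (h z) := h1.inner hh
  have h5 : Measurable fun z => (g z : V) - inner ℝ (f z : V) (g z : V) • (f z : V) :=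
    h2.sub (h3.smul h1)
  have h6 := h5.inner hh (𝕜 := ℝ)
  exact (hh.sub (h4.smul h1)).sub ((h6.div ((h3.pow_const 2).const_sub 1)).smul h5)

lemma CL_Cint (μ : Measure S2) [IsProbabilityMeasure μ]
    (hμ : ∀ g : V ≃ₗᵢ[ℝ] V, MeasurePreserving (sphereMap g) μ μ)
    (s : S2 → V) (hm : Measurable s) (hi : Integrable s μ) (b : V) (x : S2) :
    inner ℝ b (∫ y, Cker x y (s y) ∂μ) = ∫ y, inner ℝ b (CL_kv x y (s y)) ∂μ := by
  have h1 : ∫ y, Cker x y (s y) ∂μ = ∫ y, CL_kv x y (s y) ∂μ := by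
    apply integral_congr_ae
    filter_upwards [CL_ae_ne μ hμ x (CL_nrm x)] with y hy
    exact CL_Cker_eq x y hy _
  rw [h1, integral_inner]
  refine (hi.norm.const_mul 3).mono'
    (CL_kv_meas measurable_const measurable_id hm).aestronglyMeasurable
    (Filter.Eventually.of_forall fun y => CL_kv_norm x y (s y))

lemma CL_fub (μ : Measure S2) [IsProbabilityMeasure μ]
    (hμ : ∀ g : V ≃ₗᵢ[ℝ] V, MeasurePreserving (sphereMap g) μ μ)
    (s : S2 → V) (hm : Measurable s) (hi : Integrable s μ) (lam : ℝ)
    (he : ∀ᵐ x ∂μ, lam • s x = ∫ y, Cker x y (s y) ∂μ)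
    (g : S2 → ℝ) (hg : Measurable g) (K : ℝ) (hK : ∀ x, |g x| ≤ K) (b : V) :
    lam * ∫ x, g x * inner ℝ b (s x) ∂μ =
      ∫ y, ∫ x, g x * inner ℝ (s y) (CL_kv y x b) ∂μ ∂μ := by
  have h1 : lam * ∫ x, g x * inner ℝ b (s x) ∂μ
      = ∫ x, ∫ y, g x * inner ℝ b (CL_kv x y (s y)) ∂μ ∂μ := by
    rw [← integral_const_mul]
    apply integral_congr_ae
    filter_upwards [he] with x hx
    rw [integral_const_mul, ← CL_Cint μ hμ s hm hi, ← hx, inner_smul_right]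
    ring
  rw [h1, integral_integral_swap]
  · congr 1; ext y
    apply integral_congr_ae
    filter_upwards [CL_ae_ne μ hμ y (CL_nrm y)] with x hx
    rw [CL_kv_symm, CL_kv_comm y x hx]
  · have hK0 : 0 ≤ K := (abs_nonneg _).trans (hK ⟨EuclideanSpace.single 0 1, by simp⟩)
    have hdom : Integrable (fun z : S2 × S2 => (K * ‖b‖ * 3) * ‖s z.2‖) (μ.prod μ) :=
      (hi.norm.comp_snd μ).const_mul _
    refine hdom.mono' ?_ (Filter.Eventually.of_forall ?_)
    · apply Measurable.aestronglyMeasurable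
      have hk : Measurable fun z : S2 × S2 => CL_kv z.1 z.2 (s z.2) :=
        CL_kv_meas measurable_fst measurable_snd (hm.comp measurable_snd)
      exact (hg.comp measurable_fst).mul (measurable_const.inner hk)
    · rintro ⟨x, y⟩
      simp only [Function.uncurry]
      rw [norm_mul, Real.norm_eq_abs]
      have e1 := hK x
      have e2 : ‖inner ℝ b (CL_kv x y (s y))‖ ≤ ‖b‖ * (3 * ‖s y‖) :=
        (norm_inner_le_norm _ _).trans
          (mul_le_mul_of_nonneg_left (CL_kv_norm _ _ _) (norm_nonneg _))
      calc _ ≤ K * (‖b‖ * (3 * ‖s y‖)) := mul_le_mul e1 e2 (norm_nonneg _) hK0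
        _ = _ := by ring

def CL_U (μ : Measure S2) (s : S2 → V) (k : ℕ) (a c : V) : ℝ :=
  ∫ x, inner ℝ a (x : V) ^ k * inner ℝ c (s x) ∂μ

def CL_W (μ : Measure S2) (s : S2 → V) (k : ℕ) (a b c : V) : ℝ :=
  ∫ x, inner ℝ a (x : V) ^ k * inner ℝ b (x : V) * inner ℝ c (s x) ∂μ

lemma CL_inn_le (a : V) (x : S2) : |inner ℝ a (x : V)| ≤ ‖a‖ := by
  refine (abs_real_inner_le_norm _ _).trans ?_
  rw [CL_nrm, mul_one]

lemma CL_inn_meas (a : V) : Measurable fun x : S2 => inner ℝ a (x : V) :=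
  measurable_const.inner measurable_subtype_coe

lemma CL_pow_bd (a : V) (k : ℕ) (x : S2) : |inner ℝ a (x : V) ^ k| ≤ ‖a‖ ^ k := by
  rw [abs_pow]; exact pow_le_pow_left₀ (abs_nonneg _) (CL_inn_le a x) _

lemma CL_gint (μ : Measure S2) [IsProbabilityMeasure μ]
    (s : S2 → V) (hm : Measurable s) (hi : Integrable s μ)
    (g : S2 → ℝ) (hg : Measurable g) (K : ℝ) (hK : ∀ x, |g x| ≤ K) (c : V) :
    Integrable (fun x => g x * inner ℝ c (s x)) μ := by
  have : Integrable (fun x => inner ℝ c (s x)) μ := hi.const_inner c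
  exact this.bdd_mul hg.aestronglyMeasurable (Filter.Eventually.of_forall hK)

lemma CL_Uint (μ : Measure S2) [IsProbabilityMeasure μ]
    (s : S2 → V) (hm : Measurable s) (hi : Integrable s μ) (k : ℕ) (a c : V) :
    Integrable (fun x : S2 => inner ℝ a (x : V) ^ k * inner ℝ c (s x)) μ :=
  CL_gint μ s hm hi _ ((CL_inn_meas a).pow_const k) _ (CL_pow_bd a k) c

lemma CL_Wint (μ : Measure S2) [IsProbabilityMeasure μ]
    (s : S2 → V) (hm : Measurable s) (hi : Integrable s μ) (k : ℕ) (a b c : V) :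
    Integrable (fun x : S2 => inner ℝ a (x : V) ^ k * inner ℝ b (x : V) * inner ℝ c (s x)) μ :=
  CL_gint μ s hm hi _ (((CL_inn_meas a).pow_const k).mul (CL_inn_meas b)) (‖a‖ ^ k * ‖b‖) (by
    intro x; rw [Pi.mul_apply, abs_mul]
    exact mul_le_mul (CL_pow_bd a k x) (CL_inn_le b x) (abs_nonneg _) (by positivity)) c

lemma CL_odd (μ : Measure S2) [IsProbabilityMeasure μ]
    (hμ : ∀ g : V ≃ₗᵢ[ℝ] V, MeasurePreserving (sphereMap g) μ μ)
    (s : S2 → V) (hm : Measurable s) (hi : Integrable s μ) (lam : ℝ) (hl : lam ≠ 0)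
    (he : ∀ᵐ x ∂μ, lam • s x = ∫ y, Cker x y (s y) ∂μ) (m : ℕ) (a c : V) :
    CL_U μ s (2 * m + 1) a c = 0 := by
  have h := CL_fub μ hμ s hm hi lam he _ ((CL_inn_meas a).pow_const (2 * m + 1)) _
    (CL_pow_bd a (2 * m + 1)) c
  simp only [CL_main_odd μ hμ, integral_zero] at h
  exact (mul_eq_zero.mp h).resolve_left hl

/-- the even relation -/
lemma CL_even (μ : Measure S2) [IsProbabilityMeasure μ]
    (hμ : ∀ g : V ≃ₗᵢ[ℝ] V, MeasurePreserving (sphereMap g) μ μ)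
    (s : S2 → V) (hm : Measurable s) (hi : Integrable s μ) (hp : ∀ᵐ x ∂μ, s x ∈ plane x) (lam : ℝ)
    (he : ∀ᵐ x ∂μ, lam • s x = ∫ y, Cker x y (s y) ∂μ) (m : ℕ) (a b : V) (ha : ‖a‖ = 1) :
    ((2 * m + 1) * (2 * m + 2)) * (lam * CL_U μ s (2 * m) a b) =
      (2 * m + 2) * CL_U μ s 0 a b - ∑ i ∈ Finset.range (m + 1), CL_U μ s (2 * i) a b
      - 2 * ∑ j ∈ Finset.range m, ((m : ℝ) - j) *
        (inner ℝ a b * CL_U μ s (2 * j) a a - CL_W μ s (2 * j + 1) a b a) := by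
  have h := CL_fub μ hμ s hm hi lam he _ ((CL_inn_meas a).pow_const (2 * m)) _
    (CL_pow_bd a (2 * m)) b
  unfold CL_U
  rw [h, ← integral_const_mul]
  have h2 : ∫ y : S2, ((2 * m + 1) * (2 * m + 2)) *
      (∫ x : S2, inner ℝ a (x : V) ^ (2 * m) * inner ℝ (s y) (CL_kv y x b) ∂μ) ∂μ
    = ∫ y : S2, ((2 * m + 2) * (inner ℝ a (y : V) ^ 0 * inner ℝ b (s y))
        - ∑ i ∈ Finset.range (m + 1), inner ℝ a (y : V) ^ (2 * i) * inner ℝ b (s y)) -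
        2 * ∑ j ∈ Finset.range m, ((m : ℝ) - j) *
          (inner ℝ a b * (inner ℝ a (y : V) ^ (2 * j) * inner ℝ a (s y)) -
           inner ℝ a (y : V) ^ (2 * j + 1) * inner ℝ b (y : V) * inner ℝ a (s y)) ∂μ := by
    apply integral_congr_ae
    filter_upwards [CL_ae_ne μ hμ a ha, hp] with y hy hpy
    rw [CL_main μ hμ m a b (s y) y ha hy ((CL_mem_plane _ _).mp hpy)]
    unfold CL_S CL_R
    rw [← Finset.sum_mul, sub_mul, pow_zero, one_mul, mul_assoc 2, mul_assoc 2,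
      Finset.sum_mul, Finset.sum_mul]
    congr 2
    rw [Finset.sum_mul]
    apply Finset.sum_congr rfl
    intro j _
    ring
  rw [h2, integral_sub, integral_sub, integral_const_mul, integral_const_mul,
    integral_finsetSum, integral_finsetSum]
  · congr 2
    apply Finset.sum_congr rfl
    intro j _
    rw [integral_const_mul, integral_sub, integral_const_mul]
    · rfl
    · exact (CL_Uint μ s hm hi _ _ _).const_mul _
    · exact CL_Wint μ s hm hi _ _ _ _
  · intro j _
    exact (((CL_Uint μ s hm hi _ _ _).const_mul _).sub (CL_Wint μ s hm hi _ _ _ _)).const_mul _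
  · intro j _
    exact CL_Uint μ s hm hi _ _ _
  · exact (CL_Uint μ s hm hi _ _ _).const_mul _
  · exact integrable_finsetSum _ fun j _ => CL_Uint μ s hm hi _ _ _
  · exact ((CL_Uint μ s hm hi _ _ _).const_mul _).sub
      (integrable_finsetSum _ fun j _ => CL_Uint μ s hm hi _ _ _)
  · refine (integrable_finsetSum _ fun j _ => ?_).const_mul _
    exact (((CL_Uint μ s hm hi _ _ _).const_mul _).sub (CL_Wint μ s hm hi _ _ _ _)).const_mul _

lemma CL_polar (μ : Measure S2) [IsProbabilityMeasure μ]
    (s : S2 → V) (hm : Measurable s) (hi : Integrable s μ) (k : ℕ) (a b c d : V)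
    (h : ∀ t : ℝ, CL_U μ s k (a + t • b) (c + t • d) = 0) :
    k * CL_W μ s (k - 1) a b c + CL_U μ s k a d = 0 := by
  set A := ‖a‖ + ‖b‖ with hA
  set D := ‖c‖ + ‖d‖ with hD
  have hA0 : 0 ≤ A := by positivity
  have hD0 : 0 ≤ D := by positivity
  have key := hasDerivAt_integral_of_dominated_loc_of_deriv_le (μ := μ) (𝕜 := ℝ)
    (F := fun t (x : S2) => inner ℝ (a + t • b) (x : V) ^ k * inner ℝ (c + t • d) (s x))
    (F' := fun t (x : S2) => (k * inner ℝ (a + t • b) (x : V) ^ (k - 1) * inner ℝ b (x : V)) *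
        inner ℝ (c + t • d) (s x) + inner ℝ (a + t • b) (x : V) ^ k * inner ℝ d (s x))
    (x₀ := (0 : ℝ)) (s := Metric.ball 0 1)
    (bound := fun x => (k * A ^ (k - 1) * ‖b‖ * D + A ^ k * ‖d‖) * ‖s x‖)
    (Metric.ball_mem_nhds _ one_pos)
    (Filter.Eventually.of_forall fun t => (CL_Uint μ s hm hi k _ _).aestronglyMeasurable)
    (CL_Uint μ s hm hi k _ _)
    (by
      apply Measurable.aestronglyMeasurable
      have h1 := CL_inn_meas (a + (0 : ℝ) • b)
      have h2 := CL_inn_meas b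
      have h3 : Measurable fun x => inner ℝ (c + (0 : ℝ) • d) (s x) := measurable_const.inner hm
      have h4 : Measurable fun x => inner ℝ d (s x) := measurable_const.inner hm
      exact ((((h1.pow_const (k - 1)).const_mul (k : ℝ)).mul h2).mul h3).add ((h1.pow_const k).mul h4))
    (Filter.Eventually.of_forall (by
      intro x t ht
      have ht1 : |t| ≤ 1 := by
        rw [mem_ball_zero_iff] at ht; exact ht.le
      have e1 : |inner ℝ (a + t • b) (x : V)| ≤ A := by
        refine (CL_inn_le _ _).trans ((norm_add_le _ _).trans ?_)
        rw [norm_smul, Real.norm_eq_abs]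
        nlinarith [norm_nonneg b]
      have e2 : |inner ℝ (c + t • d) (s x)| ≤ D * ‖s x‖ := by
        refine (abs_real_inner_le_norm _ _).trans (mul_le_mul_of_nonneg_right ?_ (norm_nonneg _))
        refine (norm_add_le _ _).trans ?_
        rw [norm_smul, Real.norm_eq_abs]
        nlinarith [norm_nonneg d]
      have e3 := CL_inn_le b x
      have e4 : |inner ℝ d (s x)| ≤ ‖d‖ * ‖s x‖ := abs_real_inner_le_norm _ _
      rw [Real.norm_eq_abs]
      refine (abs_add_le _ _).trans ?_
      rw [abs_mul, abs_mul, abs_mul, abs_mul, abs_pow, abs_pow, Nat.abs_cast, add_mul]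
      apply add_le_add
      · calc _ ≤ (k * A ^ (k - 1) * ‖b‖) * (D * ‖s x‖) := by gcongr
          _ = _ := by ring
      · calc _ ≤ A ^ k * (‖d‖ * ‖s x‖) := by gcongr
          _ = _ := by ring))
    (hi.norm.const_mul _)
    (Filter.Eventually.of_forall (by
      intro x t _
      have d1 : HasDerivAt (fun t : ℝ => inner ℝ (a + t • b) (x : V)) (inner ℝ b (x : V)) t := by
        simp only [inner_add_left, real_inner_smul_left]
        simpa using ((hasDerivAt_id t).mul_const (inner ℝ b (x : V))).const_add (inner ℝ a (x : V))
      have d2 : HasDerivAt (fun t : ℝ => inner ℝ (c + t • d) (s x)) (inner ℝ d (s x)) t := by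
        simp only [inner_add_left, real_inner_smul_left]
        simpa using ((hasDerivAt_id t).mul_const (inner ℝ d (s x))).const_add (inner ℝ c (s x))
      exact (d1.pow k).mul d2))
  have h0 : (fun t : ℝ => ∫ x : S2, inner ℝ (a + t • b) (x : V) ^ k * inner ℝ (c + t • d) (s x) ∂μ)
      = fun _ => 0 := by
    ext t; exact h t
  have k2 := key.2
  rw [h0] at k2
  have k3 := k2.unique (hasDerivAt_const _ _)
  simp only [zero_smul, add_zero] at k3
  have k4 : ∀ x : S2, (k * inner ℝ a (x : V) ^ (k - 1) * inner ℝ b (x : V)) * inner ℝ c (s x)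
      = k * (inner ℝ a (x : V) ^ (k - 1) * inner ℝ b (x : V) * inner ℝ c (s x)) := by
    intro x; ring
  simp only [k4] at k3
  rw [integral_add ((CL_Wint μ s hm hi _ _ _ _).const_mul _) (CL_Uint μ s hm hi _ _ _),
    integral_const_mul] at k3
  exact k3

lemma CL_U_smul (μ : Measure S2) (s : S2 → V) (k : ℕ) (a c : V) (t : ℝ) :
    CL_U μ s k (t • a) c = t ^ k * CL_U μ s k a c := by
  unfold CL_U
  rw [← integral_const_mul]
  congr 1; ext x
  rw [real_inner_smul_left]; ring

lemma CL_U_smul2 (μ : Measure S2) (s : S2 → V) (k : ℕ) (a c : V) (t : ℝ) :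
    CL_U μ s k a (t • c) = t * CL_U μ s k a c := by
  unfold CL_U
  rw [← integral_const_mul]
  congr 1; ext x
  rw [real_inner_smul_left]; ring

lemma CL_W_zero (μ : Measure S2) [IsProbabilityMeasure μ]
    (s : S2 → V) (hm : Measurable s) (hi : Integrable s μ) (k : ℕ) 
    (h : ∀ a c, CL_U μ s (k + 1) a c = 0) (a b c : V) : CL_W μ s k a b c = 0 := by
  have := CL_polar μ s hm hi (k + 1) a b c 0 (fun t => h _ _)
  rw [h, add_zero] at this
  have hk : ((k + 1 : ℕ) : ℝ) ≠ 0 := by positivity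
  exact (mul_eq_zero.mp this).resolve_left hk

lemma CL_van (μ : Measure S2) [IsProbabilityMeasure μ]
    (hμ : ∀ g : V ≃ₗᵢ[ℝ] V, MeasurePreserving (sphereMap g) μ μ)
    (s : S2 → V) (hm : Measurable s) (hi : Integrable s μ) (hp : ∀ᵐ x ∂μ, s x ∈ plane x) (lam : ℝ)
    (he : ∀ᵐ x ∂μ, lam • s x = ∫ y, Cker x y (s y) ∂μ) (hl : 1 / 12 < lam)
    (h0 : ∀ a b, CL_U μ s 0 a b = 0) (m : ℕ) : ∀ a b, CL_U μ s (2 * m) a b = 0 := by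
  induction m using Nat.strong_induction_on with
  | _ m ih =>
  rcases m with _ | m
  · exact h0
  have rel : ∀ a b : V, ‖a‖ = 1 →
      ((2 * m + 3) * (2 * m + 4)) * (lam * CL_U μ s (2 * (m + 1)) a b) =
        - CL_U μ s (2 * (m + 1)) a b + 2 * CL_W μ s (2 * m + 1) a b a := by
    intro a b ha
    have h := CL_even μ hμ s hm hi hp lam he (m + 1) a b ha
    rw [h0, Finset.sum_range_succ,
      Finset.sum_eq_zero (s := Finset.range (m + 1)) (fun i hi' => ih i (Finset.mem_range.mp hi') a b),
      Finset.sum_range_succ _ m,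
      Finset.sum_eq_zero (s := Finset.range m) (fun j hj => ?_), ih m (by omega)] at h
    · push_cast at h
      linear_combination h
    · have hj' := Finset.mem_range.mp hj
      rw [ih j (by omega), CL_W_zero μ s hm hi (2 * j + 1) (ih (j + 1) (by omega))]
      ring
  have hN : (12 : ℝ) ≤ (2 * m + 3) * (2 * m + 4) := by
    have : (0 : ℝ) ≤ m := Nat.cast_nonneg m
    nlinarith
  have scale : ∀ a : V, a ≠ 0 → ‖‖a‖⁻¹ • a‖ = 1 ∧ a = ‖a‖ • (‖a‖⁻¹ • a) := by
    intro a ha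
    have : ‖a‖ ≠ 0 := norm_ne_zero_iff.mpr ha
    constructor
    · rw [norm_smul, norm_inv, norm_norm, inv_mul_cancel₀ this]
    · rw [smul_inv_smul₀ this]
  have Uz : ∀ c : V, CL_U μ s (2 * (m + 1)) 0 c = 0 := by
    intro c
    have := CL_U_smul μ s (2 * (m + 1)) 0 c 0
    rwa [zero_smul, zero_pow (by omega), zero_mul] at this
  have st1u : ∀ a : V, ‖a‖ = 1 → CL_U μ s (2 * (m + 1)) a a = 0 := by
    intro a ha
    have h := rel a a ha
    have hW : CL_W μ s (2 * m + 1) a a a = CL_U μ s (2 * (m + 1)) a a := by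
      unfold CL_W CL_U
      congr 1
    rw [hW] at h
    have h2 : ((2 * m + 3) * (2 * m + 4) * lam - 1) * CL_U μ s (2 * (m + 1)) a a = 0 := by
      linear_combination h
    have h3 : ((2 * m + 3) * (2 * m + 4) * lam - 1) ≠ 0 := by
      have : (1 : ℝ) < (2 * m + 3) * (2 * m + 4) * lam := by nlinarith
      linarith
    exact (mul_eq_zero.mp h2).resolve_left h3
  have st1 : ∀ a : V, CL_U μ s (2 * (m + 1)) a a = 0 := by
    intro a
    by_cases ha : a = 0
    · rw [ha]; exact Uz 0
    · obtain ⟨h1, h2⟩ := scale a ha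
      rw [h2, CL_U_smul, CL_U_smul2, st1u _ h1]; ring
  have st3u : ∀ a b : V, ‖a‖ = 1 → CL_U μ s (2 * (m + 1)) a b = 0 := by
    intro a b ha
    have h := rel a b ha
    have hd := CL_polar μ s hm hi (2 * (m + 1)) a b a b (fun t => st1 _)
    have e : 2 * (m + 1) - 1 = 2 * m + 1 := by omega
    rw [e] at hd
    push_cast at hd
    have h2 : ((m + 1) * ((2 * m + 3) * (2 * m + 4) * lam) + (m + 1) + 1) *
        CL_U μ s (2 * (m + 1)) a b = 0 := by
      linear_combination ((m : ℝ) + 1) * h + hd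
    have hl0 : 0 < lam := by linarith
    have h3 : ((m + 1) * ((2 * m + 3) * (2 * m + 4) * lam) + (m + 1) + 1) ≠ 0 := by positivity
    exact (mul_eq_zero.mp h2).resolve_left h3
  intro a b
  by_cases ha : a = 0
  · rw [ha]; exact Uz b
  · obtain ⟨h1, h2⟩ := scale a ha
    rw [h2, CL_U_smul, st3u _ _ h1]; ring

lemma CL_U0 (μ : Measure S2) [IsProbabilityMeasure μ]
    (hμ : ∀ g : V ≃ₗᵢ[ℝ] V, MeasurePreserving (sphereMap g) μ μ)
    (s : S2 → V) (hm : Measurable s) (hi : Integrable s μ) (hp : ∀ᵐ x ∂μ, s x ∈ plane x) (lam : ℝ)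
    (he : ∀ᵐ x ∂μ, lam • s x = ∫ y, Cker x y (s y) ∂μ) (hl : lam ≠ 1 / 2) (a b : V) :
    CL_U μ s 0 a b = 0 := by
  have h := CL_even μ hμ s hm hi hp lam he 0 (EuclideanSpace.single 0 1) b (by simp)
  have e : CL_U μ s 0 a b = CL_U μ s 0 (EuclideanSpace.single 0 1) b := by
    unfold CL_U; simp only [pow_zero]
  simp only [Finset.range_zero, Finset.sum_empty, zero_add, Finset.range_one, Finset.sum_singleton,
    mul_zero, Nat.cast_zero, ← e] at h
  have h2 : (2 * lam - 1) * CL_U μ s 0 a b = 0 := by linear_combination h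
  refine (mul_eq_zero.mp h2).resolve_left fun h3 => hl (by linarith)

def CL_e (a : V) : C(S2, ℝ) where
  toFun x := Real.exp (inner ℝ a (x : V))
  continuous_toFun := by fun_prop

def CL_M : Submonoid C(S2, ℝ) where
  carrier := Set.range CL_e
  mul_mem' := by
    rintro _ _ ⟨a, rfl⟩ ⟨b, rfl⟩
    refine ⟨a + b, ?_⟩
    ext x
    simp [CL_e, inner_add_left, Real.exp_add]
  one_mem' := ⟨0, by ext x; simp [CL_e]⟩

lemma CL_exp_int (μ : Measure S2) [IsProbabilityMeasure μ] (w : S2 → ℝ) (hw : Integrable w μ) (a : V)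
    (h : ∀ k : ℕ, ∫ x : S2, inner ℝ a (x : V) ^ k * w x ∂μ = 0) :
    ∫ x : S2, CL_e a x * w x ∂μ = 0 := by
  have hint : ∀ k : ℕ, Integrable (fun x : S2 => inner ℝ a (x : V) ^ k * w x) μ := fun k =>
    hw.bdd_mul ((CL_inn_meas a).pow_const k).aestronglyMeasurable
      (Filter.Eventually.of_forall (CL_pow_bd a k))
  have e1 : ∀ (k : ℕ) (x : S2), ‖(inner ℝ a (x : V) ^ k / (k.factorial : ℝ)) * w x‖ ≤
      (‖a‖ ^ k / (k.factorial : ℝ)) * ‖w x‖ := by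
    intro k x
    rw [norm_mul, norm_div, Real.norm_natCast, Real.norm_eq_abs (inner ℝ a (x : V) ^ k)]
    have := CL_pow_bd a k x
    gcongr
  have hint2 : ∀ k : ℕ, Integrable
      (fun x : S2 => (inner ℝ a (x : V) ^ k / (k.factorial : ℝ)) * w x) μ := by
    intro k
    refine ((hint k).const_mul (1 / (k.factorial : ℝ))).congr (Filter.Eventually.of_forall fun x => ?_)
    simp only
    ring
  have hs := hasSum_integral_of_summable_integral_norm hint2 (by
    refine Summable.of_nonneg_of_le (fun k => integral_nonneg fun x => norm_nonneg _) (fun k => ?_)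
      ((Real.summable_pow_div_factorial ‖a‖).mul_right (∫ x, ‖w x‖ ∂μ))
    rw [← integral_const_mul]
    exact integral_mono (hint2 k).norm (hw.norm.const_mul _) (e1 k))
  have hz : ∀ k : ℕ, ∫ x : S2, (inner ℝ a (x : V) ^ k / (k.factorial : ℝ)) * w x ∂μ = 0 := by
    intro k
    have : ∀ x : S2, (inner ℝ a (x : V) ^ k / (k.factorial : ℝ)) * w x =
      (1 / (k.factorial : ℝ)) * (inner ℝ a (x : V) ^ k * w x) := fun x => by ring
    simp only [this, integral_const_mul, h, mul_zero]
  simp only [hz] at hs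
  have h3 := hs.unique hasSum_zero
  rw [← h3]
  congr 1; ext x
  rw [tsum_mul_right]
  congr 1
  change Real.exp _ = _
  rw [Real.exp_eq_exp_ℝ, NormedSpace.exp_eq_tsum_div]

lemma CL_dense (μ : Measure S2) [IsProbabilityMeasure μ] (w : S2 → ℝ) (hw : MemLp w 2 μ)
    (h : ∀ (a : V) (k : ℕ), ∫ x : S2, inner ℝ a (x : V) ^ k * w x ∂μ = 0) :
    w =ᵐ[μ] 0 := by
  set W : Lp ℝ 2 μ := hw.toLp w with hW
  let L : C(S2, ℝ) →L[ℝ] ℝ := (innerSL ℝ W).comp (ContinuousMap.toLp 2 μ ℝ)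
  have hL : ∀ f : C(S2, ℝ), L f = ∫ x, f x * w x ∂μ := by
    intro f
    change inner ℝ W (ContinuousMap.toLp 2 μ ℝ f) = _
    rw [L2.inner_def]
    apply integral_congr_ae
    filter_upwards [hw.coeFn_toLp, ContinuousMap.coeFn_toLp (p := 2) (𝕜 := ℝ) μ f] with x h1 h2
    rw [hW, h1, h2]
    simp
  let A : Subalgebra ℝ C(S2, ℝ) := Algebra.adjoin ℝ (CL_M : Set C(S2, ℝ))
  have hA : ∀ f ∈ A, L f = 0 := by
    intro f hf
    have h1 : f ∈ Subalgebra.toSubmodule A := hf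
    rw [Algebra.adjoin_eq_span, Submonoid.closure_eq] at h1
    have h2 : Submodule.span ℝ (CL_M : Set C(S2, ℝ)) ≤ LinearMap.ker L.toLinearMap := by
      rw [Submodule.span_le]
      rintro _ ⟨a, rfl⟩
      change L (CL_e a) = 0
      rw [hL]
      exact CL_exp_int μ w (hw.integrable (by norm_num)) a (h a)
    exact h2 h1
  have hsep : A.SeparatesPoints := by
    intro x y hxy
    refine ⟨CL_e ((x : V) - y), ⟨CL_e ((x : V) - y), Algebra.subset_adjoin ⟨_, rfl⟩, rfl⟩, ?_⟩
    intro he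
    have he' : inner ℝ ((x : V) - y) (x : V) = inner ℝ ((x : V) - y) (y : V) := Real.exp_injective he
    apply hxy
    have : inner ℝ ((x : V) - y) ((x : V) - y) = 0 := by
      rw [inner_sub_right, he', sub_self]
    exact Subtype.ext (sub_eq_zero.mp (inner_self_eq_zero.mp this))
  have htop := ContinuousMap.subalgebra_topologicalClosure_eq_top_of_separatesPoints A hsep
  have hLz : ∀ f, L f = 0 := by
    intro f
    have hf : f ∈ A.topologicalClosure := by rw [htop]; trivial
    have hc : IsClosed {f | L f = 0} := isClosed_eq L.continuous continuous_const
    have : closure (A : Set C(S2, ℝ)) ⊆ {f | L f = 0} := closure_minimal hA hc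
    exact this hf
  have hd : DenseRange (ContinuousMap.toLp 2 μ ℝ : C(S2, ℝ) →L[ℝ] Lp ℝ 2 μ) :=
    ContinuousMap.toLp_denseRange ℝ μ ℝ (by norm_num)
  have hz : ∀ g : Lp ℝ 2 μ, inner ℝ W g = 0 := by
    intro g
    have hc : IsClosed {g : Lp ℝ 2 μ | inner ℝ W g = 0} :=
      isClosed_eq (by fun_prop) continuous_const
    exact hd.induction_on (p := fun g => inner ℝ W g = 0) g hc hLz
  have hW0 : W = 0 := inner_self_eq_zero.mp (hz W)
  have h5 := hw.coeFn_toLp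
  rw [← hW, hW0] at h5
  exact h5.symm.trans (Lp.coeFn_zero ℝ 2 μ)

lemma CL_zero (μ : Measure S2) [IsProbabilityMeasure μ]
    (hμ : ∀ g : V ≃ₗᵢ[ℝ] V, MeasurePreserving (sphereMap g) μ μ)
    (s : Lp V 2 μ) (hp : ∀ᵐ x ∂μ, s x ∈ plane x) (lam : ℝ)
    (he : ∀ᵐ x ∂μ, lam • s x = ∫ y, Cker x y (s y) ∂μ) (hl : 1 / 12 < lam)
    (h0 : lam ≠ 1 / 2 ∨ ∀ b, ∫ x, inner ℝ b (s x) ∂μ = 0) : s = 0 := by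
  have hm : Measurable s := (Lp.stronglyMeasurable s).measurable
  have hL := Lp.memLp s
  have hi : Integrable s μ := hL.integrable (by norm_num)
  have h0' : ∀ a b, CL_U μ s 0 a b = 0 := by
    rcases h0 with h0 | h0
    · exact CL_U0 μ hμ s hm hi hp lam he h0
    · intro a b
      unfold CL_U
      simp only [pow_zero, one_mul, h0]
  have hall : ∀ (a c : V) (k : ℕ), CL_U μ s k a c = 0 := by
    intro a c k
    rcases Nat.even_or_odd' k with ⟨m, rfl | rfl⟩
    · exact CL_van μ hμ s hm hi hp lam he hl h0' m a c
    · exact CL_odd μ hμ s hm hi lam (by linarith) he m a c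
  have hc : ∀ c : V, (fun x => inner ℝ c (s x)) =ᵐ[μ] 0 := fun c =>
    CL_dense μ _ (hL.const_inner c) fun a k => hall a c k
  rw [Lp.eq_zero_iff_ae_eq_zero]
  filter_upwards [hc (EuclideanSpace.single 0 1), hc (EuclideanSpace.single 1 1),
    hc (EuclideanSpace.single 2 1)] with x h1 h2 h3
  simp only [EuclideanSpace.inner_single_left, map_one, one_mul, Pi.zero_apply] at h1 h2 h3
  ext i
  fin_cases i
  · exact h1
  · exact h2
  · exact h3

def CL_sec (v : V) : C(S2, V) where
  toFun x := v - inner ℝ (x : V) v • (x : V)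
  continuous_toFun := by fun_prop

lemma CL_sec_apply (v : V) (x : S2) : CL_sec v x = v - inner ℝ (x : V) v • (x : V) := rfl

def CL_secL : V →ₗ[ℝ] C(S2, V) where
  toFun := CL_sec
  map_add' u v := by
    ext1 x
    rw [ContinuousMap.add_apply, CL_sec_apply, CL_sec_apply, CL_sec_apply, inner_add_right, add_smul]
    abel
  map_smul' t v := by
    ext1 x
    rw [ContinuousMap.smul_apply, CL_sec_apply, CL_sec_apply, inner_smul_right, mul_smul, smul_sub]
    rfl

def CL_T0 (μ : Measure S2) [IsProbabilityMeasure μ] : V →ₗ[ℝ] Lp V 2 μ :=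
  (ContinuousMap.toLp 2 μ ℝ : C(S2, V) →L[ℝ] Lp V 2 μ).toLinearMap ∘ₗ CL_secL

lemma CL_T0_coe (μ : Measure S2) [IsProbabilityMeasure μ] (v : V) :
    (CL_T0 μ v : S2 → V) =ᵐ[μ] CL_sec v :=
  ContinuousMap.coeFn_toLp (p := 2) (𝕜 := ℝ) μ (CL_sec v)

lemma CL_sec_mem (v : V) (x : S2) : inner ℝ (x : V) (CL_sec v x) = 0 := by
  rw [CL_sec_apply, inner_sub_right, inner_smul_right, CL_self]; ring

def CL_T (μ : Measure S2) [IsProbabilityMeasure μ] : V →ₗ[ℝ] Hsub μ :=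
  (CL_T0 μ).codRestrict (Hsub μ) (by
    intro v
    change ∀ᵐ x ∂μ, (CL_T0 μ v) x ∈ plane x
    filter_upwards [CL_T0_coe μ v] with x hx
    rw [hx, CL_mem_plane, CL_sec_mem])

lemma CL_T_coe (μ : Measure S2) [IsProbabilityMeasure μ] (v : V) :
    (((CL_T μ v : Hsub μ) : Lp V 2 μ) : S2 → V) =ᵐ[μ] CL_sec v := CL_T0_coe μ v

lemma CL_sec_int (μ : Measure S2) [IsProbabilityMeasure μ]
    (hμ : ∀ g : V ≃ₗᵢ[ℝ] V, MeasurePreserving (sphereMap g) μ μ) (b v : V) :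
    ∫ x, inner ℝ b (CL_sec v x) ∂μ = 2 / 3 * inner ℝ b v := by
  have h1 := CL_mom_vec μ hμ 1 (b + v)
  have h2 := CL_mom_vec μ hμ 1 (b - v)
  have i1 : ∀ c : V, Integrable (fun x : S2 => inner ℝ c (x : V) ^ (2 * 1)) μ := fun c =>
    CL_int_bd μ ((CL_inn_meas c).pow_const _) _ (CL_pow_bd c _)
  have e : ∀ x : S2, inner ℝ b (CL_sec v x) = inner ℝ b v -
      (1 / 4 * inner ℝ (b + v) (x : V) ^ (2 * 1) - 1 / 4 * inner ℝ (b - v) (x : V) ^ (2 * 1)) := by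
    intro x
    rw [CL_sec_apply, inner_sub_right, inner_smul_right, inner_add_left, inner_sub_left,
      real_inner_comm v (x : V)]
    ring
  simp only [e]
  rw [integral_sub (integrable_const _) (by exact ((i1 _).const_mul _).sub ((i1 _).const_mul _)),
    integral_sub ((i1 _).const_mul _) ((i1 _).const_mul _), integral_const_mul, integral_const_mul,
    h1, h2, integral_const]
  have n1 := norm_add_sq_real b v
  have n2 := norm_sub_sq_real b v
  simp only [mul_one, n1, n2, probReal_univ, one_smul]
  push_cast
  ring

lemma CL_kv_self (x y : S2) (h : inner ℝ (x : V) (y : V) ^ 2 ≠ 1) (v : V) :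
    CL_kv x y (CL_sec v y) = CL_kv x y v := by
  rw [← CL_Cker_eq x y h, ← CL_Cker_eq x y h, CL_sec_apply, map_sub, map_smul]
  have : Cker x y (y : V) = 0 := by
    rw [CL_Cker_eq x y h]
    unfold CL_kv
    have e : inner ℝ ((y : V) - inner ℝ (x : V) (y : V) • (x : V)) (y : V)
        = 1 - inner ℝ (x : V) (y : V) ^ 2 := by
      rw [inner_sub_left, real_inner_smul_left, CL_self]; ring
    have h' : 1 - inner ℝ (x : V) (y : V) ^ 2 ≠ 0 := fun h0 => h (by linarith)
    rw [e, div_self h', one_smul, sub_self]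
  rw [this, smul_zero, sub_zero]

lemma CL_sec_eig (μ : Measure S2) [IsProbabilityMeasure μ]
    (hμ : ∀ g : V ≃ₗᵢ[ℝ] V, MeasurePreserving (sphereMap g) μ μ) (v : V) :
    ∀ᵐ x ∂μ, ∫ y, Cker x y (CL_sec v y) ∂μ = (1 / 2 : ℝ) • CL_sec v x := by
  set a : V := EuclideanSpace.single 0 1 with ha
  have ha1 : ‖a‖ = 1 := by simp [ha]
  filter_upwards [CL_ae_ne μ hμ a ha1] with x hx
  apply ext_inner_left ℝ
  intro b
  have hm : Measurable (CL_sec v) := (CL_sec v).continuous.measurable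
  have hi : Integrable (CL_sec v) μ :=
    Continuous.integrable_of_hasCompactSupport (CL_sec v).continuous
      (HasCompactSupport.of_compactSpace _)
  rw [CL_Cint μ hμ _ hm hi]
  have h1 : ∫ y, inner ℝ b (CL_kv x y (CL_sec v y)) ∂μ
      = ∫ y : S2, inner ℝ a (y : V) ^ (2 * 0) * inner ℝ (CL_sec b x) (CL_kv x y v) ∂μ := by
    apply integral_congr_ae
    filter_upwards [CL_ae_ne μ hμ x (CL_nrm x)] with y hy
    rw [CL_kv_self x y hy, CL_sec_apply, inner_sub_left, real_inner_smul_left]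
    have : inner ℝ (x : V) (CL_kv x y v) = 0 := by
      simp only [CL_kv, inner_sub_right, inner_smul_right, CL_self]
      ring
    rw [this]; ring
  rw [h1]
  have h2 := CL_main μ hμ 0 a v (CL_sec b x) x ha1 hx (CL_sec_mem b x)
  simp only [CL_S, CL_R, Finset.range_zero, Finset.sum_empty, zero_add, Finset.range_one,
    Finset.sum_singleton, mul_zero, Nat.cast_zero, pow_zero, zero_mul, sub_zero] at h2 ⊢
  have h3 : inner ℝ v (CL_sec b x) = inner ℝ b (CL_sec v x) := by
    rw [CL_sec_apply, CL_sec_apply, inner_sub_right, inner_sub_right, inner_smul_right,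
      inner_smul_right, real_inner_comm v b, real_inner_comm v (x : V), real_inner_comm b (x : V)]
    ring
  rw [h3] at h2
  rw [inner_smul_right]
  linear_combination h2 / 2

lemma CL_eig_ae (μ : Measure S2) [IsProbabilityMeasure μ]
    (Cop : Hsub μ →L[ℝ] Hsub μ)
    (hC : ∀ s : Hsub μ, ∀ᵐ x ∂μ,
      ((Cop s : Lp V 2 μ) : S2 → V) x = ∫ y, Cker x y (((s : Lp V 2 μ) : S2 → V) y) ∂μ)
    (s : Hsub μ) (lam : ℝ) (h : Cop s = lam • s) :
    ∀ᵐ x ∂μ, lam • ((s : Lp V 2 μ) : S2 → V) x = ∫ y, Cker x y (((s : Lp V 2 μ) : S2 → V) y) ∂μ := by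
  have h1 := hC s
  rw [h] at h1
  filter_upwards [h1, Lp.coeFn_smul lam (s : Lp V 2 μ)] with x h2 h3
  rw [← h2]
  exact h3.symm

lemma CL_T_eig (μ : Measure S2) [IsProbabilityMeasure μ]
    (hμ : ∀ g : V ≃ₗᵢ[ℝ] V, MeasurePreserving (sphereMap g) μ μ)
    (Cop : Hsub μ →L[ℝ] Hsub μ)
    (hC : ∀ s : Hsub μ, ∀ᵐ x ∂μ,
      ((Cop s : Lp V 2 μ) : S2 → V) x = ∫ y, Cker x y (((s : Lp V 2 μ) : S2 → V) y) ∂μ) (v : V) :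
    Cop (CL_T μ v) = (1 / 2 : ℝ) • CL_T μ v := by
  apply Subtype.ext
  apply Lp.ext
  filter_upwards [hC (CL_T μ v), CL_sec_eig μ hμ v, CL_T_coe μ v,
    Lp.coeFn_smul (1 / 2 : ℝ) ((CL_T μ v : Hsub μ) : Lp V 2 μ)] with x h1 h2 h3 h4
  rw [h1]
  refine Eq.trans ?_ h4.symm
  rw [Pi.smul_apply, h3, ← h2]
  apply integral_congr_ae
  filter_upwards [CL_T_coe μ v] with y hy
  rw [hy]

lemma CL_T_inner (μ : Measure S2) [IsProbabilityMeasure μ]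
    (hμ : ∀ g : V ≃ₗᵢ[ℝ] V, MeasurePreserving (sphereMap g) μ μ) (b v : V) :
    ∫ x, inner ℝ b (((CL_T μ v : Hsub μ) : Lp V 2 μ) x) ∂μ = 2 / 3 * inner ℝ b v := by
  rw [← CL_sec_int μ hμ]
  apply integral_congr_ae
  filter_upwards [CL_T_coe μ v] with y hy
  rw [hy]

lemma CL_T_inj (μ : Measure S2) [IsProbabilityMeasure μ]
    (hμ : ∀ g : V ≃ₗᵢ[ℝ] V, MeasurePreserving (sphereMap g) μ μ) :
    Function.Injective (CL_T μ) := by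
  rw [← LinearMap.ker_eq_bot, LinearMap.ker_eq_bot']
  intro v hv
  have h := CL_T_inner μ hμ v v
  rw [hv] at h
  have h2 : ∫ x, inner ℝ v ((((0 : Hsub μ) : Lp V 2 μ) : S2 → V) x) ∂μ = 0 := by
    rw [← integral_zero S2 ℝ (μ := μ)]
    apply integral_congr_ae
    filter_upwards [Lp.coeFn_zero V 2 μ] with x hx
    have : (((0 : Hsub μ) : Lp V 2 μ) : S2 → V) x = 0 := hx
    rw [this, inner_zero_right]
  rw [h2] at h
  exact (inner_self_eq_zero (𝕜 := ℝ)).mp (by linarith)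

lemma CL_eigspace (μ : Measure S2) [IsProbabilityMeasure μ]
    (hμ : ∀ g : V ≃ₗᵢ[ℝ] V, MeasurePreserving (sphereMap g) μ μ)
    (Cop : Hsub μ →L[ℝ] Hsub μ)
    (hC : ∀ s : Hsub μ, ∀ᵐ x ∂μ,
      ((Cop s : Lp V 2 μ) : S2 → V) x = ∫ y, Cker x y (((s : Lp V 2 μ) : S2 → V) y) ∂μ) :
    Module.End.eigenspace (Cop : Hsub μ →ₗ[ℝ] Hsub μ) (1 / 2 : ℝ) = LinearMap.range (CL_T μ) := by
  apply le_antisymm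
  · intro s hs
    have hs' : Cop s = (1 / 2 : ℝ) • s := Module.End.mem_eigenspace_iff.mp hs
    set v : V := (3 / 2 : ℝ) • ∫ x, (s : Lp V 2 μ) x ∂μ with hv
    set r : Hsub μ := s - CL_T μ v with hr
    have hr' : Cop r = (1 / 2 : ℝ) • r := by
      rw [hr, map_sub, hs', CL_T_eig μ hμ Cop hC, smul_sub]
    have hsi : Integrable ((s : Lp V 2 μ) : S2 → V) μ := (Lp.memLp _).integrable (by norm_num)
    have hTi : Integrable (((CL_T μ v : Hsub μ) : Lp V 2 μ) : S2 → V) μ :=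
      (Lp.memLp _).integrable (by norm_num)
    have hz := CL_zero μ hμ (r : Lp V 2 μ) r.2 (1 / 2) (CL_eig_ae μ Cop hC r _ hr') (by norm_num)
      (Or.inr (by
        intro b
        have h1 : ∫ x, inner ℝ b ((r : Lp V 2 μ) x) ∂μ =
            ∫ x, (inner ℝ b ((s : Lp V 2 μ) x) - inner ℝ b (((CL_T μ v : Hsub μ) : Lp V 2 μ) x)) ∂μ := by
          apply integral_congr_ae
          filter_upwards [Lp.coeFn_sub (s : Lp V 2 μ) ((CL_T μ v : Hsub μ) : Lp V 2 μ)] with x hx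
          have : (r : Lp V 2 μ) x = (s : Lp V 2 μ) x - ((CL_T μ v : Hsub μ) : Lp V 2 μ) x := hx
          rw [this, inner_sub_right]
        rw [h1, integral_sub (hsi.const_inner b) (hTi.const_inner b), CL_T_inner μ hμ,
          integral_inner hsi, hv, inner_smul_right]
        ring))
    have hr0 : r = 0 := Subtype.ext hz
    exact ⟨v, (sub_eq_zero.mp (hr ▸ hr0)).symm⟩
  · rintro _ ⟨v, rfl⟩
    rw [Module.End.mem_eigenspace_iff]
    exact CL_T_eig μ hμ Cop hC v

lemma CL_gap (μ : Measure S2) [IsProbabilityMeasure μ]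
    (hμ : ∀ g : V ≃ₗᵢ[ℝ] V, MeasurePreserving (sphereMap g) μ μ)
    (Cop : Hsub μ →L[ℝ] Hsub μ)
    (hC : ∀ s : Hsub μ, ∀ᵐ x ∂μ,
      ((Cop s : Lp V 2 μ) : S2 → V) x = ∫ y, Cker x y (((s : Lp V 2 μ) : S2 → V) y) ∂μ)
    (lam : ℝ) (h : Module.End.HasEigenvalue (Cop : Hsub μ →ₗ[ℝ] Hsub μ) lam) (hl : lam ≠ 1 / 2) :
    lam ≤ 1 / 12 := by
  by_contra hlt
  push Not at hlt
  obtain ⟨s, hs⟩ := h.exists_hasEigenvector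
  have hs' : Cop s = lam • s := hs.apply_eq_smul
  exact hs.2 (Subtype.ext (CL_zero μ hμ (s : Lp V 2 μ) s.2 lam (CL_eig_ae μ Cop hC s _ hs') hlt
    (Or.inl hl)))

/-- The largest eigenvalue of the common lines operator `C` is `1/2`, its
eigenspace is `3`-dimensional, and every other eigenvalue `λ` of `C` satisfies `λ ≤ 1/12`;
in particular there is a spectral gap of `1/2 - 1/12 = 5/12` separating the maximal
eigenvalue from the rest of the spectrum. -/
theorem common_lines_operator_spectral_gap
    (μ : Measure S2) [IsProbabilityMeasure μ]
    (hμ : ∀ g : V ≃ₗᵢ[ℝ] V, MeasurePreserving (sphereMap g) μ μ)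
    (Cop : Hsub μ →L[ℝ] Hsub μ)
    (hC : ∀ s : Hsub μ, ∀ᵐ x ∂μ,
      ((Cop s : Lp V 2 μ) : S2 → V) x = ∫ y, Cker x y (((s : Lp V 2 μ) : S2 → V) y) ∂μ) :
    Module.End.HasEigenvalue (Cop : Hsub μ →ₗ[ℝ] Hsub μ) (1 / 2) ∧
    (∀ lam : ℝ, Module.End.HasEigenvalue (Cop : Hsub μ →ₗ[ℝ] Hsub μ) lam → lam ≤ 1 / 2) ∧
    Module.finrank ℝ
      (Module.End.eigenspace (Cop : Hsub μ →ₗ[ℝ] Hsub μ) (1 / 2 : ℝ)) = 3 ∧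
    (∀ lam : ℝ, Module.End.HasEigenvalue (Cop : Hsub μ →ₗ[ℝ] Hsub μ) lam →
      lam ≠ 1 / 2 → lam ≤ 1 / 12) := by
  have hinj := CL_T_inj μ hμ
  have hE := CL_eigspace μ hμ Cop hC
  have hgap := CL_gap μ hμ Cop hC
  refine ⟨?_, ?_, ?_, hgap⟩
  · rw [Module.End.hasEigenvalue_iff, hE]
    intro h
    rw [LinearMap.range_eq_bot] at h
    have h1 : CL_T μ (EuclideanSpace.single 0 1) = CL_T μ 0 := by rw [h]; simp
    have h2 : (EuclideanSpace.single 0 1 : V) = 0 := hinj h1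
    have h3 : ‖(EuclideanSpace.single 0 1 : V)‖ = 1 := by simp
    rw [h2, norm_zero] at h3
    exact zero_ne_one h3
  · intro lam h
    by_cases hl : lam = 1 / 2
    · exact hl.le
    · have := hgap lam h hl
      linarith
  · rw [hE, LinearMap.finrank_range_of_inj hinj]
    simp
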